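/- arXiv:1508.07613 — 8 statements merged into one kernel-verified Lean document; each statement's English description precedes it below -/
import Mathlib

section
/- Let α ∈ (0,1/2) and let ω : ℝ×(0,∞) → ℝ be measurable, odd in x1, and satisfy 0 ≤ ω ≤ 1 on D⁺. Then for every x = (x1,x2) in the closure of D⁺ with x2 ≤ x1, one has −∫_{(0,∞)×(0,x2)} K1(x,y) ω(y) dy ≤ (1/α)·(1/(1−2α) − 2^{−α})·x1^{1−2α}. -/
open MeasureTheory

noncomputable section

/-- Euclidean distance between points of `ℝ²` written as pairs. -/
def edist2 (p q : ℝ × ℝ) : ℝ := Real.sqrt ((p.1 - q.1) ^ 2 + (p.2 - q.2) ^ 2)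

/-- The open quadrant `D⁺ = (0,∞) × (0,∞)`. -/
def Dplus : Set (ℝ × ℝ) := Set.Ioi 0 ×ˢ Set.Ioi 0

/-- `K1(x,y) = (y₂-x₂)/|x-y|^{2+2α} - (y₂-x₂)/|x-ỹ|^{2+2α}
  - (y₂+x₂)/|x+y|^{2+2α} + (y₂+x₂)/|x-ȳ|^{2+2α}`, where `ỹ = (-y₁,y₂)`, `ȳ = (y₁,-y₂)`. -/
def K1 (α : ℝ) (x y : ℝ × ℝ) : ℝ :=
  (y.2 - x.2) / edist2 x y ^ (2 + 2 * α)
  - (y.2 - x.2) / edist2 x (-y.1, y.2) ^ (2 + 2 * α)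
  - (y.2 + x.2) / edist2 x (-y.1, -y.2) ^ (2 + 2 * α)
  + (y.2 + x.2) / edist2 x (y.1, -y.2) ^ (2 + 2 * α)

/-- `K2(x,y) = (y₁-x₁)/|x-y|^{2+2α} + (y₁+x₁)/|x-ỹ|^{2+2α}
  - (y₁+x₁)/|x+y|^{2+2α} - (y₁-x₁)/|x-ȳ|^{2+2α}`, where `ỹ = (-y₁,y₂)`, `ȳ = (y₁,-y₂)`. -/
def K2 (α : ℝ) (x y : ℝ × ℝ) : ℝ :=
  (y.1 - x.1) / edist2 x y ^ (2 + 2 * α)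
  + (y.1 + x.1) / edist2 x (-y.1, y.2) ^ (2 + 2 * α)
  - (y.1 + x.1) / edist2 x (-y.1, -y.2) ^ (2 + 2 * α)
  - (y.1 - x.1) / edist2 x (y.1, -y.2) ^ (2 + 2 * α)

/-- The kernel `s / (t² + s²)^{1+α}` is even and decreasing in `|t|`. -/
def halfKernel (α s t : ℝ) : ℝ := s / (t ^ 2 + s ^ 2) ^ (1 + α)

lemma halfKernel_nonneg {α s : ℝ} (hs : 0 ≤ s) (t : ℝ) : 0 ≤ halfKernel α s t :=
  div_nonneg hs (Real.rpow_nonneg (by positivity) _)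

lemma halfKernel_neg (α s t : ℝ) : halfKernel α s (-t) = halfKernel α s t := by
  simp [halfKernel]

lemma halfKernel_le_of_sq_le {α s t u : ℝ} (hα : 0 ≤ α) (hs : 0 < s) (h : t ^ 2 ≤ u ^ 2) :
    halfKernel α s u ≤ halfKernel α s t := by
  unfold halfKernel
  have : 0 < t ^ 2 + s ^ 2 := by positivity
  gcongr

lemma measurable_halfKernel (α : ℝ) : Measurable fun p : ℝ × ℝ => halfKernel α p.1 p.2 := by
  unfold halfKernel
  fun_prop

lemma integrable_halfKernel {α s : ℝ} (hα : 0 ≤ α) (hs : 0 < s) :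
    Integrable (halfKernel α s) := by
  have h1 : Integrable fun t : ℝ => (s / (s ^ 2) ^ (1 + α)) * (1 + (t / s) ^ 2)⁻¹ :=
    (integrable_inv_one_add_sq.comp_div hs.ne').const_mul _
  refine h1.mono' ((measurable_halfKernel α).comp measurable_prodMk_left).aestronglyMeasurable
    (Filter.Eventually.of_forall fun t => ?_)
  rw [Real.norm_of_nonneg (halfKernel_nonneg hs.le t), halfKernel]
  have e : t ^ 2 + s ^ 2 = s ^ 2 * (1 + (t / s) ^ 2) := by
    field_simp
    ring
  have h2 : (1 : ℝ) + (t / s) ^ 2 ≤ (1 + (t / s) ^ 2) ^ (1 + α) :=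
    Real.self_le_rpow_of_one_le (by nlinarith [sq_nonneg (t / s)]) (by linarith)
  have h3 : 0 < (s ^ 2) ^ (1 + α) := by positivity
  rw [e, Real.mul_rpow (by positivity) (by positivity), ← div_div, ← div_eq_mul_inv]
  gcongr

/-- Reflecting the line at `a` and cancelling the tails leaves only the part on `(-a, a)`. -/
lemma lintegral_reflect_sub_le {h : ℝ → ℝ} (hint : Integrable h) (hmeas : Measurable h)
    (h0 : ∀ t, 0 ≤ h t) (heven : ∀ t, h (-t) = h t)
    (hanti : ∀ t u, t ^ 2 ≤ u ^ 2 → h u ≤ h t) {a : ℝ} (ha : 0 ≤ a) :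
    ∫⁻ y in Set.Ioi (0 : ℝ), ENNReal.ofReal (h (a - y) - h (a + y)) ≤
      2 * ∫⁻ t in Set.Ioo 0 a, ENNReal.ofReal (h t) := by
  set H : ℝ → ENNReal := fun t => ENNReal.ofReal (h t) with hH
  have hHm : Measurable H := hmeas.ennreal_ofReal
  have hHneg : ∀ t, H (-t) = H t := fun t => by simp only [hH, heven]
  have hfin : ∀ S : Set ℝ, ∫⁻ t in S, H t ≠ ⊤ := fun S =>
    (lt_of_le_of_lt (setLIntegral_le_lintegral S H) hint.lintegral_lt_top).ne
  have e1 : ∫⁻ y in Set.Ioi (0 : ℝ), H (a - y) = ∫⁻ t in Set.Iio a, H t := by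
    rw [← lintegral_indicator measurableSet_Ioi, ← lintegral_indicator measurableSet_Iio,
      ← lintegral_sub_left_eq_self _ a]
    congr 1 with y
    simp [Set.indicator_apply]
  have e2 : ∫⁻ y in Set.Ioi (0 : ℝ), H (a + y) = ∫⁻ t in Set.Ioi a, H t := by
    rw [← lintegral_indicator measurableSet_Ioi, ← lintegral_indicator measurableSet_Ioi,
      ← lintegral_add_left_eq_self ((Set.Ioi a).indicator _) a]
    congr 1 with y
    simp [Set.indicator_apply]
  have e3 : ∫⁻ t in Set.Iio (-a), H t = ∫⁻ t in Set.Ioi a, H t := by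
    rw [← lintegral_indicator measurableSet_Ioi, ← lintegral_indicator measurableSet_Iio,
      ← lintegral_neg_eq_self]
    congr 1 with y
    simp [Set.indicator_apply, hHneg]
  have e4 : ∫⁻ t in Set.Ioo (-a) 0, H t = ∫⁻ t in Set.Ioo 0 a, H t := by
    rw [← lintegral_indicator measurableSet_Ioo, ← lintegral_indicator measurableSet_Ioo,
      ← lintegral_neg_eq_self]
    congr 1 with y
    simp [Set.indicator_apply, hHneg, and_comm]
  have e5 : ∫⁻ t in Set.Iio a, H t ≤
      (∫⁻ t in Set.Iio (-a), H t) + ((∫⁻ t in Set.Ioo (-a) 0, H t) + ∫⁻ t in Set.Ioo 0 a, H t) := by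
    have hsub : Set.Iio a ≤ᵐ[volume] (Set.Iio (-a) ∪ (Set.Ioo (-a) 0 ∪ Set.Ioo 0 a) : Set ℝ) := by
      filter_upwards [Measure.ae_ne volume (-a), Measure.ae_ne volume 0] with t h1 h2 (h3 : t < a)
      rcases lt_or_gt_of_ne h1 with h1 | h1
      · exact Or.inl h1
      · rcases lt_or_gt_of_ne h2 with h2 | h2
        · exact Or.inr (Or.inl ⟨h1, h2⟩)
        · exact Or.inr (Or.inr ⟨h2, h3⟩)
    calc _ ≤ _ := lintegral_mono_set' hsub
      _ ≤ _ := lintegral_union_le _ _ _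
      _ ≤ _ := by gcongr; exact lintegral_union_le _ _ _
  calc ∫⁻ y in Set.Ioi (0 : ℝ), ENNReal.ofReal (h (a - y) - h (a + y))
      = ∫⁻ y in Set.Ioi (0 : ℝ), (H (a - y) - H (a + y)) := by
        simp only [hH, ENNReal.ofReal_sub _ (h0 _)]
    _ = (∫⁻ y in Set.Ioi (0 : ℝ), H (a - y)) - ∫⁻ y in Set.Ioi (0 : ℝ), H (a + y) := by
        refine lintegral_sub (by fun_prop) (e2 ▸ hfin _) ?_
        filter_upwards [ae_restrict_mem measurableSet_Ioi] with y (hy : 0 < y)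
        exact ENNReal.ofReal_le_ofReal (hanti _ _ (by nlinarith))
    _ ≤ 2 * ∫⁻ t in Set.Ioo 0 a, H t := by
        rw [tsub_le_iff_right, e1, e2]
        calc _ ≤ _ := e5
          _ = _ := by rw [e3, e4]; ring

/-- Integrating the kernel in its first variable. -/
lemma lintegral_halfKernel_sub {α b t : ℝ} (hα : 0 < α) (hb : 0 ≤ b) (ht : 0 < t) :
    ∫⁻ y in Set.Ioo 0 b, ENNReal.ofReal (halfKernel α (b - y) t) =
      ENNReal.ofReal (1 / (2 * α) * (t ^ (-2 * α) - (t ^ 2 + b ^ 2) ^ (-α))) := by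
  have hpos : ∀ y, 0 < t ^ 2 + (b - y) ^ 2 := fun y => by positivity
  have hcont : Continuous fun y => halfKernel α (b - y) t := by
    unfold halfKernel
    refine Continuous.div (by fun_prop) ?_ fun y => (Real.rpow_pos_of_pos (hpos y) _).ne'
    exact Continuous.rpow_const (by fun_prop) fun y => Or.inl (hpos y).ne'
  have hderiv : ∀ y, HasDerivAt (fun y => 1 / (2 * α) * (t ^ 2 + (b - y) ^ 2) ^ (-α))
      (halfKernel α (b - y) t) y := by
    intro y
    have h1 : HasDerivAt (fun y => t ^ 2 + (b - y) ^ 2) (-2 * (b - y)) y := by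
      refine ((((hasDerivAt_id y).const_sub b).pow 2).const_add (t ^ 2)).congr_deriv ?_
      simp
    have h2 := (h1.rpow_const (p := -α) (Or.inl (hpos y).ne')).const_mul (1 / (2 * α))
    refine h2.congr_deriv ?_
    rw [halfKernel, show -α - 1 = -(1 + α) by ring, Real.rpow_neg (hpos y).le]
    field_simp
  have hI : ∫ y in (0 : ℝ)..b, halfKernel α (b - y) t =
      1 / (2 * α) * (t ^ (-2 * α) - (t ^ 2 + b ^ 2) ^ (-α)) := by
    rw [intervalIntegral.integral_eq_sub_of_hasDerivAt (fun y _ => hderiv y)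
      (hcont.intervalIntegrable _ _)]
    have : t ^ (-2 * α) = (t ^ 2) ^ (-α) := by
      rw [← Real.rpow_natCast_mul ht.le]
      congr 1
      push_cast
      ring
    rw [this]
    simp
    ring
  rw [← hI, intervalIntegral.integral_of_le hb, integral_Ioc_eq_integral_Ioo,
    ofReal_integral_eq_lintegral_ofReal]
  · exact (hcont.integrableOn_Icc (a := 0) (b := b)).mono_set Set.Ioo_subset_Icc_self
  · filter_upwards [ae_restrict_mem measurableSet_Ioo] with y hy
    exact halfKernel_nonneg (by linarith [hy.2]) t

lemma setLIntegral_rpow_sub_le {α a b : ℝ} (hα : 0 < α) (hα' : α < 1 / 2) (hb : 0 ≤ b)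
    (hba : b ≤ a) :
    ∫⁻ t in Set.Ioo 0 a, ENNReal.ofReal (1 / (2 * α) * (t ^ (-2 * α) - (t ^ 2 + b ^ 2) ^ (-α))) ≤
      ENNReal.ofReal (1 / (2 * α) * (1 / (1 - 2 * α) - 2 ^ (-α)) * a ^ (1 - 2 * α)) := by
  have ha : 0 ≤ a := hb.trans hba
  set c : ℝ := (2 * a ^ 2) ^ (-α) with hc
  have hcle : ∀ t, 0 < t → t < a → c ≤ t ^ (-2 * α) := by
    intro t ht hta
    have : t ^ (-2 * α) = (t ^ 2) ^ (-α) := by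
      rw [← Real.rpow_natCast_mul ht.le]
      congr 1
      push_cast
      ring
    rw [this]
    exact Real.rpow_le_rpow_of_nonpos (by positivity) (by nlinarith) (by linarith)
  have hii : IntervalIntegrable (fun t : ℝ => t ^ (-2 * α)) volume 0 a :=
    intervalIntegral.intervalIntegrable_rpow' (by linarith)
  have hac : a * c = 2 ^ (-α) * a ^ (1 - 2 * α) := by
    rcases ha.eq_or_lt with h | h
    · rw [← h, Real.zero_rpow (by linarith)]
      simp
    · rw [hc, Real.mul_rpow (by norm_num) (by positivity), ← Real.rpow_natCast_mul h.le,
        show 1 - 2 * α = 1 + ((2 : ℕ) : ℝ) * -α by push_cast; ring, Real.rpow_add h, Real.rpow_one]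
      ring
  have hI : ∫ t in (0 : ℝ)..a, 1 / (2 * α) * (t ^ (-2 * α) - c) =
      1 / (2 * α) * (1 / (1 - 2 * α) - 2 ^ (-α)) * a ^ (1 - 2 * α) := by
    rw [intervalIntegral.integral_const_mul,
      intervalIntegral.integral_sub hii intervalIntegrable_const,
      integral_rpow (Or.inl (by linarith)), intervalIntegral.integral_const, sub_zero,
      smul_eq_mul, hac, show -2 * α + 1 = 1 - 2 * α by ring, Real.zero_rpow (by linarith)]
    ring
  rw [← hI, intervalIntegral.integral_of_le ha, integral_Ioc_eq_integral_Ioo,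
    ofReal_integral_eq_lintegral_ofReal]
  · refine setLIntegral_mono' measurableSet_Ioo fun t ht => ENNReal.ofReal_le_ofReal ?_
    have h1 : c ≤ (t ^ 2 + b ^ 2) ^ (-α) :=
      Real.rpow_le_rpow_of_nonpos (by nlinarith [ht.1]) (by nlinarith [ht.1, ht.2]) (by linarith)
    gcongr
  · have := (hii.sub (intervalIntegrable_const (c := c))).const_mul (1 / (2 * α))
    exact ((intervalIntegrable_iff_integrableOn_Ioo_of_le ha).1 this)
  · filter_upwards [ae_restrict_mem measurableSet_Ioo] with t ht
    have := hcle t ht.1 ht.2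
    exact mul_nonneg (by positivity) (by linarith)

lemma edist2_rpow (α : ℝ) (p q : ℝ × ℝ) :
    edist2 p q ^ (2 + 2 * α) = ((p.1 - q.1) ^ 2 + (p.2 - q.2) ^ 2) ^ (1 + α) := by
  rw [edist2, Real.sqrt_eq_rpow, ← Real.rpow_mul (by positivity)]
  congr 1
  ring

/-- `K1` in terms of the half kernel. -/
lemma neg_K1_eq (α : ℝ) (x y : ℝ × ℝ) :
    -K1 α x y = (halfKernel α (x.2 - y.2) (x.1 - y.1) - halfKernel α (x.2 - y.2) (x.1 + y.1)) +
      (halfKernel α (x.2 + y.2) (x.1 + y.1) - halfKernel α (x.2 + y.2) (x.1 - y.1)) := by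
  simp only [K1, edist2_rpow, halfKernel, sub_neg_eq_add]
  ring

lemma neg_K1_mul_le {α w : ℝ} (hα : 0 ≤ α) (hw0 : 0 ≤ w) (hw1 : w ≤ 1) {x y : ℝ × ℝ}
    (hx : 0 ≤ x.1) (hy1 : 0 < y.1) (hy2 : 0 < y.2) (hyx : y.2 < x.2) :
    -(K1 α x y * w) ≤
      halfKernel α (x.2 - y.2) (x.1 - y.1) - halfKernel α (x.2 - y.2) (x.1 + y.1) := by
  have hsq : (x.1 - y.1) ^ 2 ≤ (x.1 + y.1) ^ 2 := by nlinarith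
  have h1 := halfKernel_le_of_sq_le hα (sub_pos.2 hyx) hsq
  have h2 := halfKernel_le_of_sq_le hα (by linarith : 0 < x.2 + y.2) hsq
  rw [← neg_mul, neg_K1_eq]
  nlinarith

lemma integral_le_toReal_lintegral_ofReal {X : Type*} [MeasurableSpace X] {μ : Measure X}
    (f : X → ℝ) : ∫ x, f x ∂μ ≤ (∫⁻ x, ENNReal.ofReal (f x) ∂μ).toReal := by
  by_cases hf : Integrable f μ
  · rw [integral_eq_lintegral_pos_part_sub_lintegral_neg_part hf]
    linarith [ENNReal.toReal_nonneg (a := ∫⁻ x, ENNReal.ofReal (-f x) ∂μ)]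
  · rw [integral_undef hf]
    exact ENNReal.toReal_nonneg

lemma lintegral_quadrant_strip_le {α a b : ℝ} (hα : 0 < α) (hα' : α < 1 / 2) (hb : 0 ≤ b)
    (hba : b ≤ a) :
    ∫⁻ y in Set.Ioi (0 : ℝ) ×ˢ Set.Ioo 0 b,
        ENNReal.ofReal (halfKernel α (b - y.2) (a - y.1) - halfKernel α (b - y.2) (a + y.1)) ≤
      ENNReal.ofReal (1 / α * (1 / (1 - 2 * α) - 2 ^ (-α)) * a ^ (1 - 2 * α)) := by
  have ha : 0 ≤ a := hb.trans hba
  have hK := measurable_halfKernel α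
  have hm : ∀ {β : Type} [MeasurableSpace β] {u v : β → ℝ}, Measurable u → Measurable v →
      Measurable fun z => halfKernel α (u z) (v z) := fun hu hv => hK.comp (hu.prodMk hv)
  rw [Measure.volume_eq_prod, ← Measure.prod_restrict, lintegral_prod_symm _
    (Measurable.aemeasurable <| Measurable.ennreal_ofReal <|
      Measurable.fun_sub (hm (by fun_prop) (by fun_prop)) (hm (by fun_prop) (by fun_prop)))]
  calc _ ≤ ∫⁻ y in Set.Ioo 0 b, 2 * ∫⁻ t in Set.Ioo 0 a, ENNReal.ofReal (halfKernel α (b - y) t) := by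
        refine setLIntegral_mono' measurableSet_Ioo fun y hy => ?_
        have hs : 0 < b - y := sub_pos.2 hy.2
        exact lintegral_reflect_sub_le (integrable_halfKernel hα.le hs)
          (hm measurable_const measurable_id) (halfKernel_nonneg hs.le) (halfKernel_neg α _)
          (fun t u h => halfKernel_le_of_sq_le hα.le hs h) ha
    _ = 2 * ∫⁻ t in Set.Ioo 0 a, ∫⁻ y in Set.Ioo 0 b, ENNReal.ofReal (halfKernel α (b - y) t) := by
        rw [lintegral_const_mul' _ _ (by norm_num), lintegral_lintegral_swap]
        exact (hm (by fun_prop) (by fun_prop)).ennreal_ofReal.aemeasurable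
    _ = 2 * ∫⁻ t in Set.Ioo 0 a,
          ENNReal.ofReal (1 / (2 * α) * (t ^ (-2 * α) - (t ^ 2 + b ^ 2) ^ (-α))) := by
        rw [setLIntegral_congr_fun measurableSet_Ioo
          fun t ht => lintegral_halfKernel_sub hα hb ht.1]
    _ ≤ 2 * ENNReal.ofReal (1 / (2 * α) * (1 / (1 - 2 * α) - 2 ^ (-α)) * a ^ (1 - 2 * α)) := by
        gcongr
        exact setLIntegral_rpow_sub_le hα hα' hb hba
    _ = _ := by
        rw [← ENNReal.ofReal_ofNat, ← ENNReal.ofReal_mul (by norm_num)]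
        congr 1
        field_simp

/-- For `α ∈ (0,1/2)` and `ω : ℝ×(0,∞) → ℝ` measurable, odd in `x₁`,
with `0 ≤ ω ≤ 1` on `D⁺`: for every `x` in the closure of `D⁺` with `x₂ ≤ x₁`,
`-∫_{(0,∞)×(0,x₂)} K1(x,y) ω(y) dy ≤ (1/α)·(1/(1-2α) - 2^{-α})·x₁^{1-2α}`. -/
theorem stmt3 (α : ℝ) (hα : α ∈ Set.Ioo (0 : ℝ) (1/2))
    (ω : ℝ × ℝ → ℝ) (hmeas : Measurable ω)
    (hodd : ∀ y : ℝ × ℝ, 0 < y.2 → ω (-y.1, y.2) = -ω (y.1, y.2))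
    (hbd : ∀ y ∈ Dplus, 0 ≤ ω y ∧ ω y ≤ 1)
    (x : ℝ × ℝ) (hx : x ∈ closure Dplus) (hx21 : x.2 ≤ x.1) :
    -∫ y in Set.Ioi (0 : ℝ) ×ˢ Set.Ioo 0 x.2, K1 α x y * ω y ≤
      1 / α * (1 / (1 - 2 * α) - 2 ^ (-α)) * x.1 ^ (1 - 2 * α) := by
  obtain ⟨hα0, hα1⟩ := hα
  have hcl : x ∈ Set.Ici (0 : ℝ) ×ˢ Set.Ici (0 : ℝ) := by
    rwa [Dplus, closure_prod_eq, closure_Ioi] at hx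
  have hx1 : 0 ≤ x.1 := hcl.1
  have hx2 : 0 ≤ x.2 := hcl.2
  have hconst : 0 ≤ 1 / α * (1 / (1 - 2 * α) - 2 ^ (-α)) * x.1 ^ (1 - 2 * α) := by
    have h1 : (2 : ℝ) ^ (-α) ≤ 1 :=
      Real.rpow_le_one_of_one_le_of_nonpos (by norm_num) (by linarith)
    have h2 : 1 ≤ 1 / (1 - 2 * α) := by
      rw [le_div_iff₀ (by linarith)]
      linarith
    have h3 : 0 ≤ 1 / (1 - 2 * α) - 2 ^ (-α) := by linarith
    positivity
  rw [← integral_neg]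
  refine (integral_le_toReal_lintegral_ofReal _).trans (ENNReal.toReal_le_of_le_ofReal hconst ?_)
  refine le_trans (setLIntegral_mono' (measurableSet_Ioi.prod measurableSet_Ioo) fun y hy =>
    ENNReal.ofReal_le_ofReal ?_) (lintegral_quadrant_strip_le hα0 hα1 hx2 hx21)
  have hw := hbd y ⟨hy.1, hy.2.1⟩
  exact neg_K1_mul_le hα0.le hw.1 hw.2 hx1 hy.1 hy.2.1 hy.2.2
end
end

section
/- Let α ∈ (0,1/2) and let ω : ℝ×(0,∞) → ℝ be measurable, odd in x1, and satisfy 0 ≤ ω ≤ 1 on D⁺. Then for every x = (x1,x2) in the closure of D⁺ with x1 ≤ x2, one has ∫_{(0,x1)×(0,∞)} K2(x,y) ω(y) dy ≥ −(1/α)·(1/(1−2α) − 2^{−α})·x2^{1−2α}. -/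
open MeasureTheory

noncomputable section

open Set

/-- The profile `u / (u² + v²)^{1+α}` of which `K2` is a signed sum. -/
def rieszProfile (α u v : ℝ) : ℝ := u / (u ^ 2 + v ^ 2) ^ (1 + α)

lemma sqrt_rpow_two_add (A α : ℝ) (hA : 0 ≤ A) :
    Real.sqrt A ^ (2 + 2 * α) = A ^ (1 + α) := by
  rw [Real.sqrt_eq_rpow, ← Real.rpow_mul hA]
  congr 1
  ring

lemma K2_eq_rieszProfile (α : ℝ) (x y : ℝ × ℝ) :
    K2 α x y = -rieszProfile α (x.1 - y.1) (y.2 - x.2) + rieszProfile α (x.1 + y.1) (y.2 - x.2)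
      - rieszProfile α (x.1 + y.1) (y.2 + x.2) + rieszProfile α (x.1 - y.1) (y.2 + x.2) := by
  unfold K2 rieszProfile edist2
  simp only
  rw [sqrt_rpow_two_add _ _ (by positivity), sqrt_rpow_two_add _ _ (by positivity),
    sqrt_rpow_two_add _ _ (by positivity), sqrt_rpow_two_add _ _ (by positivity)]
  rw [show (x.1 - y.1) ^ 2 + (x.2 - y.2) ^ 2 = (x.1 - y.1) ^ 2 + (y.2 - x.2) ^ 2 by ring,
    show (x.1 - -y.1) ^ 2 + (x.2 - y.2) ^ 2 = (x.1 + y.1) ^ 2 + (y.2 - x.2) ^ 2 by ring,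
    show (x.1 - -y.1) ^ 2 + (x.2 - -y.2) ^ 2 = (x.1 + y.1) ^ 2 + (y.2 + x.2) ^ 2 by ring,
    show (x.1 - y.1) ^ 2 + (x.2 - -y.2) ^ 2 = (x.1 - y.1) ^ 2 + (y.2 + x.2) ^ 2 by ring]
  ring

lemma rieszProfile_nonneg (α v : ℝ) {u : ℝ} (hu : 0 ≤ u) : 0 ≤ rieszProfile α u v := by
  unfold rieszProfile
  positivity

lemma rieszProfile_le_of_sq_le {α u v w : ℝ} (hα : 0 < α) (hu : 0 < u) (h : v ^ 2 ≤ w ^ 2) :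
    rieszProfile α u w ≤ rieszProfile α u v := by
  unfold rieszProfile
  gcongr

lemma measurable_rieszProfile (α : ℝ) :
    Measurable (fun p : ℝ × ℝ => rieszProfile α p.1 p.2) := by
  unfold rieszProfile
  fun_prop

lemma integrable_rieszProfile {α u : ℝ} (hα : 0 < α) (hu : 0 < u) :
    Integrable (rieszProfile α u) := by
  have h := (integrable_inv_one_add_sq.comp_div hu.ne').const_mul (u / ((u ^ 2) ^ α * u ^ 2))
  refine h.mono' ((measurable_rieszProfile α).comp
    measurable_prodMk_left).aestronglyMeasurable (ae_of_all _ fun v => ?_)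
  rw [Real.norm_of_nonneg (rieszProfile_nonneg α v hu.le)]
  unfold rieszProfile
  have h1 : u / ((u ^ 2) ^ α * u ^ 2) * (1 + (v / u) ^ 2)⁻¹
      = u / ((u ^ 2) ^ α * (u ^ 2 + v ^ 2)) := by
    field_simp
  rw [h1, add_comm 1 α, Real.rpow_add_one (by positivity)]
  gcongr
  nlinarith [sq_nonneg v]

lemma setIntegral_Ioi_zero_comp_add (f : ℝ → ℝ) (c : ℝ) :
    ∫ y in Ioi (0 : ℝ), f (y + c) = ∫ y in Ioi c, f y := by
  have h := (measurePreserving_add_right volume c).setIntegral_preimage_emb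
    (measurableEmbedding_addRight c) f (Ioi c)
  simpa using h

lemma integral_rieszProfile_sub_shift {α u c : ℝ} (hα : 0 < α) (hu : 0 < u) :
    ∫ y in Ioi (0 : ℝ), (rieszProfile α u (y - c) - rieszProfile α u (y + c))
      = 2 * ∫ v in (0 : ℝ)..c, rieszProfile α u v := by
  have hi := integrable_rieszProfile hα hu
  have heven : ∀ v, rieszProfile α u (-v) = rieszProfile α u v := fun v => by
    simp [rieszProfile]
  rw [integral_sub (hi.comp_sub_right c).integrableOn (hi.comp_add_right c).integrableOn,
    setIntegral_Ioi_zero_comp_add (rieszProfile α u) c,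
    show ∫ y in Ioi (0 : ℝ), rieszProfile α u (y - c) = ∫ y in Ioi (-c), rieszProfile α u y from
      setIntegral_Ioi_zero_comp_add (rieszProfile α u) (-c),
    ← intervalIntegral.integral_interval_add_Ioi (a := -c) (b := c) hi.integrableOn hi.integrableOn,
    add_sub_cancel_right,
    ← intervalIntegral.integral_add_adjacent_intervals (b := 0) hi.intervalIntegrable
      hi.intervalIntegrable, two_mul]
  congr 1
  have := intervalIntegral.integral_comp_neg (a := 0) (b := c) (rieszProfile α u)
  simp only [heven, neg_zero] at this
  exact this.symm

lemma integral_rieszProfile_fst {α b v : ℝ} (hα : 0 < α) (hv : 0 < v) :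
    ∫ u in (0 : ℝ)..b, rieszProfile α u v
      = 1 / (2 * α) * (v ^ (-(2 * α)) - (b ^ 2 + v ^ 2) ^ (-α)) := by
  have hd : ∀ u : ℝ, HasDerivAt (fun u => -(1 / (2 * α)) * (u ^ 2 + v ^ 2) ^ (-α))
      (rieszProfile α u v) u := fun u => by
    have hp : 0 < u ^ 2 + v ^ 2 := by positivity
    have := ((((hasDerivAt_id u).pow 2).add_const (v ^ 2)).rpow_const (p := -α)
      (Or.inl hp.ne')).const_mul (-(1 / (2 * α)))
    refine this.congr_deriv ?_
    simp only [rieszProfile, Pi.pow_apply, id_eq]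
    rw [show -α - 1 = -(1 + α) by ring, Real.rpow_neg hp.le]
    simp
    field_simp
  have hc : Continuous fun u => rieszProfile α u v := by
    unfold rieszProfile
    refine continuous_id.div ?_ fun u => by positivity
    exact (by fun_prop : Continuous fun u : ℝ => u ^ 2 + v ^ 2).rpow_const
      fun u => Or.inl (by positivity)
  rw [intervalIntegral.integral_eq_sub_of_hasDerivAt (fun u _ => hd u) (hc.intervalIntegrable _ _)]
  rw [show v ^ (-(2 * α)) = ((0 : ℝ) ^ 2 + v ^ 2) ^ (-α) by
    rw [zero_pow two_ne_zero, zero_add, ← Real.rpow_natCast v 2, ← Real.rpow_mul hv.le]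
    congr 1
    push_cast
    ring]
  ring

lemma integral_rpow_sub_const {α c : ℝ} (hα : α < 1 / 2) (hc : 0 < c) :
    ∫ v in (0 : ℝ)..c, (v ^ (-(2 * α)) - (2 * c ^ 2) ^ (-α))
      = (1 / (1 - 2 * α) - 2 ^ (-α)) * c ^ (1 - 2 * α) := by
  rw [intervalIntegral.integral_sub (intervalIntegral.intervalIntegrable_rpow' (by linarith))
    intervalIntegrable_const, integral_rpow (Or.inl (by linarith)),
    intervalIntegral.integral_const, Real.zero_rpow (by linarith),
    Real.mul_rpow (by norm_num) (by positivity), ← Real.rpow_natCast c 2, ← Real.rpow_mul hc.le,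
    show -(2 * α) + 1 = 1 - 2 * α by ring,
    show ((2 : ℕ) : ℝ) * -α = 1 - 2 * α - 1 by push_cast; ring, Real.rpow_sub_one hc.ne']
  have : 1 - 2 * α ≠ 0 := by linarith
  simp only [smul_eq_mul]
  field_simp
  ring

lemma lintegral_rieszProfile_strip_le {α b c : ℝ} (hα : 0 < α) (hα' : α < 1 / 2) (hb : 0 < b)
    (hbc : b ≤ c) :
    ∫⁻ y in Ioo (0 : ℝ) b ×ˢ Ioi (0 : ℝ), ENNReal.ofReal
        (rieszProfile α (b - y.1) (y.2 - c) - rieszProfile α (b - y.1) (y.2 + c))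
      ≤ ENNReal.ofReal (1 / α * (1 / (1 - 2 * α) - 2 ^ (-α)) * c ^ (1 - 2 * α)) := by
  have hc : 0 < c := hb.trans_le hbc
  have hm := measurable_rieszProfile α
  have hm₁ : Measurable fun p : ℝ × ℝ => ENNReal.ofReal
      (rieszProfile α (b - p.1) (p.2 - c) - rieszProfile α (b - p.1) (p.2 + c)) :=
    ((hm.comp (g := fun p : ℝ × ℝ => rieszProfile α p.1 p.2)
      (f := fun p : ℝ × ℝ => (b - p.1, p.2 - c)) (by fun_prop)).sub
      (hm.comp (g := fun p : ℝ × ℝ => rieszProfile α p.1 p.2)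
      (f := fun p : ℝ × ℝ => (b - p.1, p.2 + c)) (by fun_prop))).ennreal_ofReal
  have hm₂ : Measurable fun p : ℝ × ℝ => ENNReal.ofReal (2 * rieszProfile α (b - p.1) p.2) :=
    ((hm.comp (g := fun p : ℝ × ℝ => rieszProfile α p.1 p.2)
      (f := fun p : ℝ × ℝ => (b - p.1, p.2)) (by fun_prop)).const_mul 2).ennreal_ofReal
  have hint : IntervalIntegrable (fun v : ℝ => 1 / α * (v ^ (-(2 * α)) - (2 * c ^ 2) ^ (-α)))
      volume 0 c :=
    ((intervalIntegral.intervalIntegrable_rpow' (by linarith)).sub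
      intervalIntegrable_const).const_mul _
  calc
    _ = ∫⁻ u in Ioo (0 : ℝ) b, ∫⁻ y in Ioi (0 : ℝ), ENNReal.ofReal
          (rieszProfile α (b - u) (y - c) - rieszProfile α (b - u) (y + c)) := by
      rw [Measure.volume_eq_prod, ← Measure.prod_restrict, lintegral_prod _ hm₁.aemeasurable]
    _ = ∫⁻ u in Ioo (0 : ℝ) b, ∫⁻ v in Ioc (0 : ℝ) c,
          ENNReal.ofReal (2 * rieszProfile α (b - u) v) := by
      refine setLIntegral_congr_fun measurableSet_Ioo fun u hu => ?_
      have hu' : 0 < b - u := sub_pos.2 hu.2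
      have hi := integrable_rieszProfile hα hu'
      have hi' : Integrable fun y =>
          rieszProfile α (b - u) (y - c) - rieszProfile α (b - u) (y + c) :=
        (hi.comp_sub_right c).sub (hi.comp_add_right c)
      rw [← ofReal_integral_eq_lintegral_ofReal hi'.integrableOn,
        ← ofReal_integral_eq_lintegral_ofReal (hi.const_mul 2).integrableOn
          (ae_of_all _ fun v => mul_nonneg zero_le_two (rieszProfile_nonneg α v hu'.le))]
      · congr 1
        rw [integral_const_mul, ← intervalIntegral.integral_of_le hc.le]
        exact integral_rieszProfile_sub_shift hα hu'
      · refine (ae_restrict_iff' measurableSet_Ioi).2 (ae_of_all _ fun y (hy : 0 < y) => ?_)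
        exact sub_nonneg.2 (rieszProfile_le_of_sq_le hα hu' (by nlinarith))
    _ = ∫⁻ v in Ioc (0 : ℝ) c, ∫⁻ u in Ioo (0 : ℝ) b,
          ENNReal.ofReal (2 * rieszProfile α (b - u) v) :=
      lintegral_lintegral_swap hm₂.aemeasurable
    _ ≤ ∫⁻ v in Ioc (0 : ℝ) c,
          ENNReal.ofReal (1 / α * (v ^ (-(2 * α)) - (2 * c ^ 2) ^ (-α))) := by
      refine setLIntegral_mono' measurableSet_Ioc fun v hv => ?_
      have hcont : Continuous fun u => 2 * rieszProfile α (b - u) v := by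
        have := hv.1
        unfold rieszProfile
        refine continuous_const.mul ((continuous_const.sub continuous_id).div ?_
          fun u => by positivity)
        exact (by fun_prop : Continuous fun u : ℝ => (b - u) ^ 2 + v ^ 2).rpow_const
          fun u => Or.inl (by positivity)
      rw [← ofReal_integral_eq_lintegral_ofReal
        ((hcont.integrableOn_Icc (a := 0) (b := b)).mono_set Ioo_subset_Icc_self)]
      · refine ENNReal.ofReal_le_ofReal ?_
        rw [← integral_Ioc_eq_integral_Ioo, ← intervalIntegral.integral_of_le hb.le,
          intervalIntegral.integral_const_mul,
          intervalIntegral.integral_comp_sub_left (fun u => rieszProfile α u v) b, sub_self,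
          sub_zero, integral_rieszProfile_fst hα hv.1, ← mul_assoc,
          show 2 * (1 / (2 * α)) = 1 / α by field_simp]
        have := hv.1
        have hle : b ^ 2 + v ^ 2 ≤ 2 * c ^ 2 := by nlinarith [hv.2]
        have := Real.rpow_le_rpow_of_nonpos (by positivity) hle (neg_nonpos.2 hα.le)
        gcongr
      · refine (ae_restrict_iff' measurableSet_Ioo).2 (ae_of_all _ fun u hu => ?_)
        exact mul_nonneg zero_le_two (rieszProfile_nonneg α v (sub_pos.2 hu.2).le)
    _ = ENNReal.ofReal (1 / α * (1 / (1 - 2 * α) - 2 ^ (-α)) * c ^ (1 - 2 * α)) := by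
      rw [← ofReal_integral_eq_lintegral_ofReal
        ((intervalIntegrable_iff_integrableOn_Ioc_of_le hc.le).1 hint)]
      · rw [← intervalIntegral.integral_of_le hc.le, intervalIntegral.integral_const_mul,
          integral_rpow_sub_const hα' hc, mul_assoc]
      · refine (ae_restrict_iff' measurableSet_Ioc).2 (ae_of_all _ fun v hv => ?_)
        have hv0 := hv.1
        have hle : v ^ 2 ≤ 2 * c ^ 2 := by nlinarith [hv.2]
        have h := Real.rpow_le_rpow_of_nonpos (by positivity) hle (neg_nonpos.2 hα.le)
        rw [← Real.rpow_natCast v 2, ← Real.rpow_mul hv0.le,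
          show ((2 : ℕ) : ℝ) * -α = -(2 * α) by push_cast; ring] at h
        exact mul_nonneg (by positivity) (sub_nonneg.2 h)

lemma neg_K2_mul_le {α : ℝ} (hα : 0 < α) {x y : ℝ × ℝ} (hx : 0 ≤ x.2) (hy : 0 < y.1)
    (hyx : y.1 < x.1) (hy2 : 0 < y.2) {w : ℝ} (hw : 0 ≤ w) (hw1 : w ≤ 1) :
    -(K2 α x y * w) ≤ rieszProfile α (x.1 - y.1) (y.2 - x.2)
      - rieszProfile α (x.1 - y.1) (y.2 + x.2) := by
  have hsq : (y.2 - x.2) ^ 2 ≤ (y.2 + x.2) ^ 2 := by nlinarith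
  have h1 := rieszProfile_le_of_sq_le hα (sub_pos.2 hyx) hsq
  have h2 := rieszProfile_le_of_sq_le hα (by linarith : 0 < x.1 + y.1) hsq
  rw [K2_eq_rieszProfile]
  nlinarith

lemma neg_integral_le_of_lintegral_neg_le {X : Type*} [MeasurableSpace X] {μ : Measure X}
    {f : X → ℝ} {C : ℝ} (hC : 0 ≤ C)
    (h : ∫⁻ a, ENNReal.ofReal (-f a) ∂μ ≤ ENNReal.ofReal C) : -C ≤ ∫ a, f a ∂μ := by
  by_cases hf : Integrable f μ
  · rw [integral_eq_lintegral_pos_part_sub_lintegral_neg_part hf]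
    have h1 := ENNReal.toReal_mono ENNReal.ofReal_ne_top h
    rw [ENNReal.toReal_ofReal hC] at h1
    have h2 : 0 ≤ (∫⁻ a, ENNReal.ofReal (f a) ∂μ).toReal := ENNReal.toReal_nonneg
    linarith
  · rw [integral_undef hf]
    linarith

/-- For `α ∈ (0,1/2)` and `ω : ℝ×(0,∞) → ℝ` measurable, odd in `x₁`,
with `0 ≤ ω ≤ 1` on `D⁺`: for every `x` in the closure of `D⁺` with `x₁ ≤ x₂`,
`∫_{(0,x₁)×(0,∞)} K2(x,y) ω(y) dy ≥ -(1/α)·(1/(1-2α) - 2^{-α})·x₂^{1-2α}`. -/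
theorem stmt4 (α : ℝ) (hα : α ∈ Set.Ioo (0 : ℝ) (1/2))
    (ω : ℝ × ℝ → ℝ) (hmeas : Measurable ω)
    (hodd : ∀ y : ℝ × ℝ, 0 < y.2 → ω (-y.1, y.2) = -ω (y.1, y.2))
    (hbd : ∀ y ∈ Dplus, 0 ≤ ω y ∧ ω y ≤ 1)
    (x : ℝ × ℝ) (hx : x ∈ closure Dplus) (hx12 : x.1 ≤ x.2) :
    ∫ y in Set.Ioo (0 : ℝ) x.1 ×ˢ Set.Ioi (0 : ℝ), K2 α x y * ω y ≥
      -(1 / α * (1 / (1 - 2 * α) - 2 ^ (-α)) * x.2 ^ (1 - 2 * α)) := by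
  obtain ⟨hα0, hα1⟩ := hα
  have hx0 : 0 ≤ x.1 ∧ 0 ≤ x.2 := by
    rw [Dplus, closure_prod_eq, closure_Ioi] at hx
    exact hx
  have hcoef : 0 ≤ 1 / (1 - 2 * α) - 2 ^ (-α) := by
    have h1 : (2 : ℝ) ^ (-α) ≤ 1 :=
      Real.rpow_le_one_of_one_le_of_nonpos one_le_two (by linarith)
    have h2 : 1 ≤ 1 / (1 - 2 * α) := by
      rw [le_div_iff₀ (by linarith)]
      linarith
    linarith
  have hC : 0 ≤ 1 / α * (1 / (1 - 2 * α) - 2 ^ (-α)) * x.2 ^ (1 - 2 * α) :=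
    mul_nonneg (mul_nonneg (by positivity) hcoef) (Real.rpow_nonneg hx0.2 _)
  refine neg_integral_le_of_lintegral_neg_le hC ?_
  rcases hx0.1.eq_or_lt with h0 | h0
  · simp [← h0]
  refine le_trans (setLIntegral_mono' (measurableSet_Ioo.prod measurableSet_Ioi)
    fun y hy => ENNReal.ofReal_le_ofReal ?_) (lintegral_rieszProfile_strip_le hα0 hα1 h0 hx12)
  obtain ⟨hw0, hw1⟩ := hbd y ⟨hy.1.1, hy.2⟩
  exact neg_K2_mul_le hα0 hx0.2 hy.1.1 hy.1.2 hy.2 hw0 hw1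
end
end

section
/- Let α ∈ (0,1/2). There exists δ ∈ (0,1), depending only on α, with the following property: for every x = (x1,x2) in the closure of D⁺ with x1 ≤ δ and every measurable ω : ℝ×(0,∞) → ℝ which is odd in x1 and satisfies χ_{A(x)} ≤ ω ≤ 1 on D⁺, one has −∫_{(0,∞)×(x2,∞)} K1(x,y) ω(y) dy ≤ −(1/(6·20^α·α))·x1^{1−2α}. -/
open MeasureTheory

noncomputable section

/-- The triangle `A(x) = {y : x₁ < y₁ < x₁+1, x₂ < y₂ < x₂ + (y₁ - x₁)}`. -/
def Atri (x : ℝ × ℝ) : Set (ℝ × ℝ) :=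
  {y : ℝ × ℝ | x.1 < y.1 ∧ y.1 < x.1 + 1 ∧ x.2 < y.2 ∧ y.2 < x.2 + (y.1 - x.1)}

/-- The building block of `K1`:
`K1 α x y = kerPart α x.1 (y.1, y.2 - x.2) + kerPart α x.1 (y.1, y.2 + x.2)`. -/
def kerPart (α h : ℝ) (y : ℝ × ℝ) : ℝ :=
  y.2 * (((y.1 - h) ^ 2 + y.2 ^ 2) ^ (-α - 1) - ((y.1 + h) ^ 2 + y.2 ^ 2) ^ (-α - 1))

/-- A primitive of `kerPart` in the second variable. -/
def kerPrim (α h t w : ℝ) : ℝ :=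
  (1 / (2 * α)) * (((t + h) ^ 2 + w ^ 2) ^ (-α) - ((t - h) ^ 2 + w ^ 2) ^ (-α))

lemma K1_eq_kerPart_add_kerPart (α : ℝ) (x y : ℝ × ℝ) :
    K1 α x y = kerPart α x.1 (y.1, y.2 - x.2) + kerPart α x.1 (y.1, y.2 + x.2) := by
  have e : -α - 1 = -(1 + α) := by ring
  simp only [K1, edist2_rpow, kerPart, e]
  rw [Real.rpow_neg (by positivity), Real.rpow_neg (by positivity), Real.rpow_neg (by positivity),
    Real.rpow_neg (by positivity)]
  have e1 : (x.1 - y.1) ^ 2 + (x.2 - y.2) ^ 2 = (y.1 - x.1) ^ 2 + (y.2 - x.2) ^ 2 := by ring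
  have e2 : (x.1 - -y.1) ^ 2 + (x.2 - y.2) ^ 2 = (y.1 + x.1) ^ 2 + (y.2 - x.2) ^ 2 := by ring
  have e3 : (x.1 - -y.1) ^ 2 + (x.2 - -y.2) ^ 2 = (y.1 + x.1) ^ 2 + (y.2 + x.2) ^ 2 := by ring
  have e4 : (x.1 - y.1) ^ 2 + (x.2 - -y.2) ^ 2 = (y.1 - x.1) ^ 2 + (y.2 + x.2) ^ 2 := by ring
  rw [e1, e2, e3, e4]
  ring

lemma measurable_kerPart (α h : ℝ) : Measurable (kerPart α h) := by
  unfold kerPart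
  fun_prop

lemma kerPart_nonneg {α h : ℝ} (hα : 0 < α) (hh : 0 ≤ h) {y : ℝ × ℝ} (hy1 : 0 < y.1)
    (hy2 : 0 < y.2) : 0 ≤ kerPart α h y := by
  refine mul_nonneg hy2.le (sub_nonneg.2 ?_)
  refine Real.rpow_le_rpow_of_nonpos (by positivity) ?_ (by linarith)
  nlinarith [mul_nonneg hy1.le hh]

lemma hasDerivAt_kerPrim {α h t : ℝ} (hα : 0 < α) (h1 : t - h ≠ 0) (h2 : t + h ≠ 0) (w : ℝ) :
    HasDerivAt (kerPrim α h t) (kerPart α h (t, w)) w := by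
  have aux : ∀ a : ℝ, a ≠ 0 →
      HasDerivAt (fun w : ℝ => (a ^ 2 + w ^ 2) ^ (-α))
        (2 * w * (-α) * (a ^ 2 + w ^ 2) ^ (-α - 1)) w := by
    intro a ha
    have hd : HasDerivAt (fun w : ℝ => a ^ 2 + w ^ 2) (2 * w) w := by
      simpa using (hasDerivAt_pow 2 w).const_add (a ^ 2)
    exact hd.rpow_const (Or.inl (by positivity))
  have hd := ((aux _ h2).sub (aux _ h1)).const_mul (1 / (2 * α))
  refine hd.congr_deriv ?_
  simp only [kerPart]
  field_simp
  ring

lemma tendsto_kerPrim {α : ℝ} (hα : 0 < α) (h t : ℝ) :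
    Filter.Tendsto (kerPrim α h t) Filter.atTop (nhds 0) := by
  have aux : ∀ a : ℝ, Filter.Tendsto (fun w : ℝ => (a ^ 2 + w ^ 2) ^ (-α)) Filter.atTop (nhds 0) :=
    fun a => (tendsto_rpow_neg_atTop hα).comp
      (Filter.tendsto_atTop_add_const_left _ _ (Filter.tendsto_pow_atTop two_ne_zero))
  have hlim := ((aux (t + h)).sub (aux (t - h))).const_mul (1 / (2 * α))
  rw [sub_zero, mul_zero] at hlim
  exact hlim

lemma kerPrim_zero (α h t : ℝ) :
    kerPrim α h t 0 = (1 / (2 * α)) * (|t + h| ^ (-(2 * α)) - |t - h| ^ (-(2 * α))) := by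
  have aux : ∀ a : ℝ, (a ^ 2 + 0 ^ 2) ^ (-α) = |a| ^ (-(2 * α)) := by
    intro a
    rw [← sq_abs, zero_pow two_ne_zero, add_zero, ← Real.rpow_natCast,
      ← Real.rpow_mul (abs_nonneg a)]
    congr 1
    push_cast
    ring
  simp only [kerPrim, aux]

lemma integrableOn_abs_sub_rpow {r h : ℝ} (hr : -1 < r) :
    IntegrableOn (fun t : ℝ => |t - h| ^ r) (Set.Ioc 0 (2 * h)) := by
  rcases le_or_gt h 0 with hh | hh
  · rw [Set.Ioc_eq_empty (by linarith)]
    exact integrableOn_empty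
  have hi := intervalIntegral.intervalIntegrable_rpow' (a := 0) (b := h) hr
  have hR : IntegrableOn (fun t : ℝ => |t - h| ^ r) (Set.Ioc h (2 * h)) := by
    have := hi.comp_sub_right h
    rw [intervalIntegrable_iff_integrableOn_Ioc_of_le (by linarith), zero_add, ← two_mul] at this
    refine this.congr_fun (fun t ht => ?_) measurableSet_Ioc
    simp only
    rw [abs_of_pos (sub_pos.2 ht.1)]
  have hL : IntegrableOn (fun t : ℝ => |t - h| ^ r) (Set.Ioc 0 h) := by
    have := (hi.comp_sub_left h).symm
    rw [sub_self, sub_zero, intervalIntegrable_iff_integrableOn_Ioc_of_le hh.le] at this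
    refine this.congr_fun (fun t ht => ?_) measurableSet_Ioc
    simp only
    rw [abs_sub_comm, abs_of_nonneg (sub_nonneg.2 ht.2)]
  rw [← Set.Ioc_union_Ioc_eq_Ioc hh.le (by linarith : h ≤ 2 * h)]
  exact hL.union hR

lemma rpow_neg_sub_rpow_neg_le {q a s : ℝ} (hq0 : 0 ≤ q) (hq1 : q ≤ 1) (ha : 0 < a) (hs : 0 ≤ s) :
    a ^ (-q) - (a + s) ^ (-q) ≤ q * s * a ^ (-q - 1) := by
  have hfac : a + s = a * (1 + s / a) := by field_simp
  have hsa : 0 ≤ s / a := by positivity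
  have hB := rpow_one_add_le_one_add_mul_self (s := s / a) (by linarith) hq0 hq1
  have hpos : 0 < (1 + s / a) ^ q := by positivity
  have hinv : 1 - q * (s / a) ≤ (1 + s / a) ^ (-q) := by
    rw [Real.rpow_neg (by positivity)]
    have h1 : (1 + q * (s / a))⁻¹ ≤ ((1 + s / a) ^ q)⁻¹ := by gcongr
    refine le_trans ?_ h1
    have h2 : 0 ≤ q * (s / a) := by positivity
    rw [← one_div, le_div_iff₀ (by positivity)]
    nlinarith
  rw [hfac, Real.mul_rpow ha.le (by positivity), Real.rpow_sub_one ha.ne']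
  have := mul_le_mul_of_nonneg_left hinv (Real.rpow_nonneg ha.le (-q))
  have e : q * s * (a ^ (-q) / a) = a ^ (-q) * (q * (s / a)) := by ring
  rw [e]
  linarith

lemma integrableOn_abs_rpow_sub_abs_rpow {q h : ℝ} (hq0 : 0 < q) (hq1 : q < 1) (hh : 0 < h) :
    IntegrableOn (fun t : ℝ => |t - h| ^ (-q) - |t + h| ^ (-q)) (Set.Ioi 0) := by
  rw [← Set.Ioc_union_Ioi_eq_Ioi (by linarith : (0 : ℝ) ≤ 2 * h)]
  refine IntegrableOn.union ?_ ?_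
  · refine (integrableOn_abs_sub_rpow (by linarith)).sub ?_
    have hc : ContinuousOn (fun t : ℝ => |t + h| ^ (-q)) (Set.Icc 0 (2 * h)) := by
      refine ContinuousOn.rpow_const (by fun_prop) (fun t ht => Or.inl ?_)
      have : 0 < t + h := by linarith [ht.1]
      exact (abs_pos_of_pos this).ne'
    exact hc.integrableOn_Icc.mono_set Set.Ioc_subset_Icc_self
  · have hbase : IntegrableOn (fun t : ℝ => t ^ (-q - 1)) (Set.Ioi h) :=
      integrableOn_Ioi_rpow_of_lt (by linarith) hh
    have hdom : IntegrableOn (fun t : ℝ => q * (2 * h) * (t - h) ^ (-q - 1)) (Set.Ioi (2 * h)) := by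
      have := (hbase.integrable_indicator measurableSet_Ioi).comp_sub_right h
      refine (IntegrableOn.congr_fun this.integrableOn (fun t ht => ?_) measurableSet_Ioi).const_mul _
      have ht' : t - h ∈ Set.Ioi h := by
        simp only [Set.mem_Ioi] at ht ⊢
        linarith
      simp only [Set.indicator_of_mem ht']
    refine Integrable.mono' hdom (by fun_prop) ?_
    refine (ae_restrict_iff' measurableSet_Ioi).2 (Filter.Eventually.of_forall fun t ht => ?_)
    simp only [Set.mem_Ioi] at ht
    have hp : 0 < t - h := by linarith
    have hle := rpow_neg_sub_rpow_neg_le hq0.le hq1.le hp (by positivity : 0 ≤ 2 * h)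
    have e : t - h + 2 * h = t + h := by ring
    rw [e] at hle
    rw [abs_of_pos hp, abs_of_pos (by linarith : 0 < t + h), Real.norm_eq_abs, abs_of_nonneg]
    · exact hle
    · exact sub_nonneg.2 (Real.rpow_le_rpow_of_nonpos hp (by linarith) (by linarith))

lemma integrableOn_kerPart {α h : ℝ} (hα0 : 0 < α) (hα1 : α < 1 / 2) (hh : 0 < h) :
    IntegrableOn (kerPart α h) (Set.Ioi 0 ×ˢ Set.Ioi 0) := by
  rw [IntegrableOn, Measure.volume_eq_prod, ← Measure.prod_restrict,
    integrable_prod_iff (measurable_kerPart α h).aestronglyMeasurable]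
  have hae : ∀ᵐ t ∂(volume.restrict (Set.Ioi (0 : ℝ))), 0 < t ∧ t - h ≠ 0 := by
    filter_upwards [ae_restrict_mem measurableSet_Ioi,
      ae_restrict_of_ae (Measure.ae_ne volume h)] with t ht hne
    exact ⟨ht, sub_ne_zero.2 hne⟩
  constructor
  · filter_upwards [hae] with t ht
    exact integrableOn_Ioi_deriv_of_nonneg'
      (fun w _ => hasDerivAt_kerPrim hα0 ht.2 (by linarith : 0 < t + h).ne' w)
      (fun w hw => kerPart_nonneg hα0 hh.le ht.1 hw) (tendsto_kerPrim hα0 h t)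
  · have hI := (integrableOn_abs_rpow_sub_abs_rpow (q := 2 * α) (by linarith) (by linarith)
      hh).const_mul (1 / (2 * α))
    refine Integrable.congr hI ?_
    filter_upwards [hae] with t ht
    have hnorm : ∫ w in Set.Ioi (0 : ℝ), ‖kerPart α h (t, w)‖
        = ∫ w in Set.Ioi (0 : ℝ), kerPart α h (t, w) :=
      setIntegral_congr_fun measurableSet_Ioi fun w hw =>
        Real.norm_of_nonneg (kerPart_nonneg hα0 hh.le ht.1 hw)
    rw [hnorm, integral_Ioi_of_hasDerivAt_of_nonneg'
      (fun w _ => hasDerivAt_kerPrim hα0 ht.2 (by linarith : 0 < t + h).ne' w)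
      (fun w hw => kerPart_nonneg hα0 hh.le ht.1 hw) (tendsto_kerPrim hα0 h t), kerPrim_zero]
    ring

lemma measurableSet_Atri (x : ℝ × ℝ) : MeasurableSet (Atri x) := by
  exact (measurableSet_lt measurable_const measurable_fst).inter
    ((measurableSet_lt measurable_fst measurable_const).inter
    ((measurableSet_lt measurable_const measurable_snd).inter
    (measurableSet_lt measurable_snd (measurable_const.add (measurable_fst.sub_const x.1)))))

/-- An explicitly integrable lower bound for the integral of `kerPart` over a vertical slice of
the triangle `Atri (h, 0)`. -/
def sliceBound (α h t : ℝ) : ℝ :=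
  (1 / (2 * α)) * ((1 - 2 ^ (-α)) * (t - h) ^ (-(2 * α)) - (t + h) ^ (-(2 * α))
    + 2 ^ (-α) * (t + (√2 - 1) * h) ^ (-(2 * α)))

lemma sq_rpow_neg {a : ℝ} (ha : 0 ≤ a) (α : ℝ) : (a ^ 2) ^ (-α) = a ^ (-(2 * α)) := by
  rw [← Real.rpow_natCast, ← Real.rpow_mul ha]
  congr 1
  push_cast
  ring

lemma sliceBound_le {α h t : ℝ} (hα : 0 < α) (hh : 0 < h) (ht : h < t) :
    sliceBound α h t ≤ kerPrim α h t (t - h) - kerPrim α h t 0 := by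
  have hz : 0 < t - h := sub_pos.2 ht
  have hs : (1 : ℝ) < √2 := Real.one_lt_sqrt_two
  have hs2 : √2 ^ 2 = 2 := Real.sq_sqrt (by norm_num)
  have hc : 0 < t + (√2 - 1) * h := by nlinarith
  have e1 : ((t - h) ^ 2 + (t - h) ^ 2) ^ (-α) = 2 ^ (-α) * (t - h) ^ (-(2 * α)) := by
    rw [← two_mul, Real.mul_rpow (by norm_num) (by positivity), sq_rpow_neg hz.le]
  have e2 : 2 ^ (-α) * (t + (√2 - 1) * h) ^ (-(2 * α))
      ≤ ((t + h) ^ 2 + (t - h) ^ 2) ^ (-α) := by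
    rw [← sq_rpow_neg hc.le, ← Real.mul_rpow (by norm_num) (by positivity)]
    refine Real.rpow_le_rpow_of_nonpos (by positivity) ?_ (by linarith)
    have hid : 2 * (t + (√2 - 1) * h) ^ 2 - ((t + h) ^ 2 + (t - h) ^ 2)
        = 4 * (√2 - 1) * h * (t - h) := by linear_combination 2 * h ^ 2 * hs2
    have : 0 ≤ 4 * (√2 - 1) * h * (t - h) :=
      mul_nonneg (mul_nonneg (by linarith) hh.le) hz.le
    linarith
  rw [kerPrim_zero, abs_of_pos hz, abs_of_pos (by linarith : 0 < t + h), kerPrim, e1, ← mul_sub,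
    sliceBound]
  refine mul_le_mul_of_nonneg_left ?_ (by positivity)
  linarith

lemma integral_shift_rpow {r c a b : ℝ} (hr : -1 < r) :
    ∫ t in a..b, (t + c) ^ r = ((b + c) ^ (r + 1) - (a + c) ^ (r + 1)) / (r + 1) := by
  rw [intervalIntegral.integral_comp_add_right (fun t => t ^ r), integral_rpow (Or.inl hr)]

lemma intervalIntegrable_shift_rpow {r c a b : ℝ} (hr : -1 < r) :
    IntervalIntegrable (fun t : ℝ => (t + c) ^ r) volume a b := by
  have := (intervalIntegral.intervalIntegrable_rpow' (a := a + c) (b := b + c) hr).comp_add_right c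
  simpa using this

lemma intervalIntegrable_sliceBound {α : ℝ} (hα1 : α < 1 / 2) (h a b : ℝ) :
    IntervalIntegrable (sliceBound α h) volume a b := by
  have hr : -1 < -(2 * α) := by linarith
  refine IntervalIntegrable.const_mul (((IntervalIntegrable.const_mul ?_ _).sub ?_).add
    (IntervalIntegrable.const_mul ?_ _)) _
  · simpa only [sub_eq_add_neg] using intervalIntegrable_shift_rpow hr
  · exact intervalIntegrable_shift_rpow hr
  · exact intervalIntegrable_shift_rpow hr

lemma integral_sliceBound {α : ℝ} (hα1 : α < 1 / 2) (h : ℝ) :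
    ∫ t in h..h + 1, sliceBound α h t = (1 / (2 * α)) * ((1 - 2 ^ (-α))
      - ((1 + 2 * h) ^ (1 - 2 * α) - (2 * h) ^ (1 - 2 * α))
      + 2 ^ (-α) * ((1 + √2 * h) ^ (1 - 2 * α) - (√2 * h) ^ (1 - 2 * α))) / (1 - 2 * α) := by
  have hr : -1 < -(2 * α) := by linarith
  have i1 : IntervalIntegrable (fun t : ℝ => (t - h) ^ (-(2 * α))) volume h (h + 1) := by
    simpa only [sub_eq_add_neg] using intervalIntegrable_shift_rpow hr
  have j1 : ∫ t in h..h + 1, (t - h) ^ (-(2 * α)) = 1 / (1 - 2 * α) := by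
    have := integral_shift_rpow (c := -h) (a := h) (b := h + 1) hr
    simp only [← sub_eq_add_neg] at this
    rw [this, sub_self, add_sub_cancel_left, Real.one_rpow,
      Real.zero_rpow (by linarith), sub_zero, neg_add_eq_sub]
  have i2 : IntervalIntegrable (fun t : ℝ => (t + h) ^ (-(2 * α))) volume h (h + 1) :=
    intervalIntegrable_shift_rpow hr
  have i3 : IntervalIntegrable (fun t : ℝ => (t + (√2 - 1) * h) ^ (-(2 * α))) volume h (h + 1) :=
    intervalIntegrable_shift_rpow hr
  simp only [sliceBound]
  rw [intervalIntegral.integral_const_mul,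
    intervalIntegral.integral_add ((i1.const_mul _).sub i2) (i3.const_mul _),
    intervalIntegral.integral_sub (i1.const_mul _) i2, intervalIntegral.integral_const_mul,
    intervalIntegral.integral_const_mul, j1, integral_shift_rpow hr, integral_shift_rpow hr,
    neg_add_eq_sub, show h + 1 + h = 1 + 2 * h by ring, show h + h = 2 * h by ring,
    show h + 1 + (√2 - 1) * h = 1 + √2 * h by ring, show h + (√2 - 1) * h = √2 * h by ring]
  ring

lemma le_integral_sliceBound {α h : ℝ} (hα0 : 0 < α) (hα1 : α < 1 / 2) (hh : 0 < h)
    (hsmall : 8 * 20 ^ α * h ^ (2 * α) ≤ 1) :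
    (1 / (6 * 20 ^ α * α)) * h ^ (1 - 2 * α) ≤ ∫ t in h..h + 1, sliceBound α h t := by
  rw [integral_sliceBound hα1]
  set β := 1 - 2 * α with hβ
  have hβ0 : 0 < β := by linarith
  have hβ1 : β ≤ 1 := by linarith
  have hs : √2 ≤ 1.415 := Real.sqrt_le_iff.2 ⟨by norm_num, by norm_num⟩
  have b1 : (1 + 2 * h) ^ β ≤ 1 + β * (2 * h) :=
    rpow_one_add_le_one_add_mul_self (by linarith) hβ0.le hβ1
  have b2 : 1 ≤ (1 + √2 * h) ^ β :=
    Real.one_le_rpow (by have := mul_nonneg (Real.sqrt_nonneg 2) hh.le; linarith) hβ0.le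
  have p2 : (0 : ℝ) < 2 ^ (-α) := by positivity
  have p4 : (0 : ℝ) < 4 ^ (-α) := by positivity
  have m4 : (2 : ℝ) ^ (-α) * 2 ^ (-α) = 4 ^ (-α) := by
    rw [← Real.mul_rpow (by norm_num) (by norm_num)]
    norm_num
  have c1 : (2 * h) ^ β = 2 * 4 ^ (-α) * h ^ β := by
    rw [Real.mul_rpow (by norm_num) hh.le]
    congr 1
    rw [hβ, sub_eq_add_neg, Real.rpow_add (by norm_num), Real.rpow_one, ← sq_rpow_neg (by norm_num)]
    norm_num
  have c2 : 2 ^ (-α) * (√2 * h) ^ β = √2 * 4 ^ (-α) * h ^ β := by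
    rw [Real.mul_rpow (by positivity) hh.le, hβ, sub_eq_add_neg,
      Real.rpow_add (by positivity) 1 (-(2 * α)), Real.rpow_one, ← sq_rpow_neg (by positivity),
      Real.sq_sqrt (by norm_num), ← m4]
    ring
  have hle : (20 : ℝ) ^ (-α) ≤ 4 ^ (-α) :=
    Real.rpow_le_rpow_of_nonpos (by norm_num) (by norm_num) (by linarith)
  have hpos : (0 : ℝ) < h ^ β := by positivity
  have p20 : (0 : ℝ) < 20 ^ α := by positivity
  have e20 : (20 : ℝ) ^ (-α) = 1 / 20 ^ α := by
    rw [Real.rpow_neg (by norm_num), one_div]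
  have hsplit : h = h ^ β * h ^ (2 * α) := by
    rw [← Real.rpow_add hh, hβ, sub_add_cancel, Real.rpow_one]
  have hh8 : 8 * h ≤ 20 ^ (-α) * h ^ β := by
    have h1 : 8 * h ^ (2 * α) ≤ 20 ^ (-α) := by
      rw [e20, le_div_iff₀ p20]
      linarith
    calc 8 * h = 8 * h ^ (2 * α) * h ^ β := by linear_combination 8 * hsplit
      _ ≤ _ := by gcongr
  have hdiv : ∀ u v : ℝ, β * u ≤ v → (1 / (2 * α)) * u ≤ (1 / (2 * α)) * v / β := by
    intro u v huv
    rw [le_div_iff₀ hβ0, mul_assoc, mul_comm u]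
    gcongr
  have hl : (1 / (6 * 20 ^ α * α)) * h ^ β = (1 / (2 * α)) * (20 ^ (-α) * h ^ β / 3) := by
    rw [e20]
    field_simp
    norm_num
  rw [hl]
  have hX : 20 ^ (-α) * h ^ β ≤ 4 ^ (-α) * h ^ β := by gcongr
  have hX0 : 0 < 20 ^ (-α) * h ^ β := by positivity
  refine hdiv _ _ ?_
  have b3 : 2 ^ (-α) * 1 ≤ 2 ^ (-α) * (1 + √2 * h) ^ β := mul_le_mul_of_nonneg_left b2 p2.le
  have b4 : β * (8 * h) ≤ β * (20 ^ (-α) * h ^ β) := mul_le_mul_of_nonneg_left hh8 hβ0.le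
  have b5 : β * (20 ^ (-α) * h ^ β) ≤ 1 * (20 ^ (-α) * h ^ β) :=
    mul_le_mul_of_nonneg_right hβ1 hX0.le
  have b6 : √2 * (4 ^ (-α) * h ^ β) ≤ 1.415 * (4 ^ (-α) * h ^ β) := by gcongr
  rw [mul_sub, c1, c2]
  linarith

lemma integrable_indicator_Atri_kerPart {α h : ℝ} (hα0 : 0 < α) (hα1 : α < 1 / 2) (hh : 0 < h) :
    Integrable ((Atri (h, 0)).indicator (kerPart α h)) := by
  refine IntegrableOn.integrable_indicator ?_ (measurableSet_Atri _)
  refine (integrableOn_kerPart hα0 hα1 hh).mono_set ?_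
  rintro y ⟨h1, -, h2, -⟩
  exact ⟨hh.trans h1, h2⟩

lemma integral_slice_Atri {α h : ℝ} (hα0 : 0 < α) (hh : 0 < h) (t : ℝ) :
    ∫ w, (Atri (h, 0)).indicator (kerPart α h) (t, w)
      = (Set.Ioo h (h + 1)).indicator (fun t => kerPrim α h t (t - h) - kerPrim α h t 0) t := by
  by_cases ht : t ∈ Set.Ioo h (h + 1)
  · have hz : 0 < t - h := sub_pos.2 ht.1
    have hd := hasDerivAt_kerPrim hα0 hz.ne' (by linarith : 0 < t + h).ne'
    have hset : (fun w => (Atri (h, 0)).indicator (kerPart α h) (t, w))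
        = (Set.Ioo 0 (t - h)).indicator (fun w => kerPart α h (t, w)) := by
      ext w
      have : (t, w) ∈ Atri (h, 0) ↔ w ∈ Set.Ioo 0 (t - h) := by
        simp [Atri, ht.1, ht.2]
      by_cases hw : w ∈ Set.Ioo 0 (t - h)
      · rw [Set.indicator_of_mem hw, Set.indicator_of_mem (this.2 hw)]
      · rw [Set.indicator_of_notMem hw, Set.indicator_of_notMem (mt this.1 hw)]
    rw [Set.indicator_of_mem ht, hset, integral_indicator measurableSet_Ioo,
      ← integral_Ioc_eq_integral_Ioo, ← intervalIntegral.integral_of_le hz.le]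
    refine intervalIntegral.integral_eq_sub_of_hasDerivAt (fun w _ => hd w) ?_
    refine ContinuousOn.intervalIntegrable fun w _ => ContinuousAt.continuousWithinAt ?_
    have hb : t + h ≠ 0 := by linarith
    simp only [kerPart]
    refine continuousAt_id.mul (ContinuousAt.sub ?_ ?_)
    · exact ContinuousAt.rpow_const (by fun_prop) (Or.inl (by positivity))
    · exact ContinuousAt.rpow_const (by fun_prop) (Or.inl (by positivity))
  · rw [Set.indicator_of_notMem ht]
    refine integral_eq_zero_of_ae (Filter.Eventually.of_forall fun w => ?_)
    exact Set.indicator_of_notMem (fun hw => ht ⟨hw.1, hw.2.1⟩) _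

lemma le_integral_indicator_Atri {α h : ℝ} (hα0 : 0 < α) (hα1 : α < 1 / 2) (hh : 0 < h)
    (hsmall : 8 * 20 ^ α * h ^ (2 * α) ≤ 1) :
    (1 / (6 * 20 ^ α * α)) * h ^ (1 - 2 * α)
      ≤ ∫ y, (Atri (h, 0)).indicator (kerPart α h) y := by
  have hint := integrable_indicator_Atri_kerPart hα0 hα1 hh
  have hout := hint.integral_prod_left
  refine (le_integral_sliceBound hα0 hα1 hh hsmall).trans ?_
  rw [Measure.volume_eq_prod, integral_prod _ hint]
  simp only [integral_slice_Atri hα0 hh] at hout ⊢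
  rw [intervalIntegral.integral_of_le (by linarith), integral_Ioc_eq_integral_Ioo,
    ← integral_indicator measurableSet_Ioo]
  refine integral_mono ?_ hout fun t => ?_
  · rw [integrable_indicator_iff measurableSet_Ioo]
    exact ((intervalIntegrable_iff_integrableOn_Ioc_of_le (by linarith)).1
      (intervalIntegrable_sliceBound hα1 h h (h + 1))).mono_set Set.Ioo_subset_Ioc_self
  · exact Set.indicator_le_indicator' fun ht => sliceBound_le hα0 hh ht.1

lemma integrableOn_K1 {α : ℝ} (hα0 : 0 < α) (hα1 : α < 1 / 2) {x : ℝ × ℝ} (hx1 : 0 < x.1)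
    (hx2 : 0 ≤ x.2) : IntegrableOn (K1 α x) (Set.Ioi 0 ×ˢ Set.Ioi x.2) := by
  have hm : MeasurableSet (Set.Ioi (0 : ℝ) ×ˢ Set.Ioi (0 : ℝ)) :=
    measurableSet_Ioi.prod measurableSet_Ioi
  have hI := (integrableOn_kerPart hα0 hα1 hx1).integrable_indicator hm
  have hsum := (hI.comp_sub_right (0, x.2)).add (hI.comp_add_right (0, x.2))
  refine IntegrableOn.congr_fun hsum.integrableOn (fun y hy => ?_)
    (measurableSet_Ioi.prod measurableSet_Ioi)
  obtain ⟨h1, h2⟩ := hy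
  simp only [Set.mem_Ioi] at h1 h2
  have e1 : y - (0, x.2) = (y.1, y.2 - x.2) := by ext <;> simp
  have e2 : y + (0, x.2) = (y.1, y.2 + x.2) := by ext <;> simp
  have m1 : (y.1, y.2 - x.2) ∈ Set.Ioi (0 : ℝ) ×ˢ Set.Ioi (0 : ℝ) := ⟨h1, sub_pos.2 h2⟩
  have m2 : (y.1, y.2 + x.2) ∈ Set.Ioi (0 : ℝ) ×ˢ Set.Ioi (0 : ℝ) :=
    ⟨h1, show 0 < y.2 + x.2 by linarith⟩
  simp only [Pi.add_apply]
  rw [e1, e2, Set.indicator_of_mem m1, Set.indicator_of_mem m2, K1_eq_kerPart_add_kerPart]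

lemma kerPart_le_K1 {α : ℝ} (hα : 0 < α) {x y : ℝ × ℝ} (hx1 : 0 ≤ x.1) (hx2 : 0 ≤ x.2)
    (hy1 : 0 < y.1) (hy2 : x.2 < y.2) : kerPart α x.1 (y.1, y.2 - x.2) ≤ K1 α x y := by
  rw [K1_eq_kerPart_add_kerPart]
  exact le_add_of_nonneg_right (kerPart_nonneg hα hx1 hy1 (show 0 < y.2 + x.2 by linarith))

lemma le_integral_K1_mul {α : ℝ} (hα0 : 0 < α) (hα1 : α < 1 / 2) {x : ℝ × ℝ} (hx1 : 0 < x.1)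
    (hx2 : 0 ≤ x.2) (hsmall : 8 * 20 ^ α * x.1 ^ (2 * α) ≤ 1) {ω : ℝ × ℝ → ℝ} (hω : Measurable ω)
    (hb : ∀ y ∈ Dplus, (Atri x).indicator (fun _ => (1 : ℝ)) y ≤ ω y ∧ ω y ≤ 1) :
    (1 / (6 * 20 ^ α * α)) * x.1 ^ (1 - 2 * α)
      ≤ ∫ y in Set.Ioi (0 : ℝ) ×ˢ Set.Ioi x.2, K1 α x y * ω y := by
  have hm : MeasurableSet (Set.Ioi (0 : ℝ) ×ˢ Set.Ioi x.2) :=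
    measurableSet_Ioi.prod measurableSet_Ioi
  have hmem : ∀ y ∈ Set.Ioi (0 : ℝ) ×ˢ Set.Ioi x.2, y ∈ Dplus :=
    fun y hy => ⟨hy.1, lt_of_le_of_lt hx2 hy.2⟩
  have hω0 : ∀ y ∈ Dplus, 0 ≤ ω y := fun y hy =>
    (Set.indicator_nonneg (fun _ _ => zero_le_one) y).trans (hb y hy).1
  have hKint := integrableOn_K1 hα0 hα1 hx1 hx2
  have hK : IntegrableOn (fun y => K1 α x y * ω y) (Set.Ioi (0 : ℝ) ×ˢ Set.Ioi x.2) := by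
    refine Integrable.mul_bdd (c := 1) hKint hω.aestronglyMeasurable ?_
    filter_upwards [ae_restrict_mem hm] with y hy
    rw [Real.norm_of_nonneg (hω0 y (hmem y hy))]
    exact (hb y (hmem y hy)).2
  have hTint := integrable_indicator_Atri_kerPart hα0 hα1 hx1
  refine (le_integral_indicator_Atri hα0 hα1 hx1 hsmall).trans ?_
  rw [← integral_sub_right_eq_self _ (0, x.2), ← integral_indicator hm]
  refine integral_mono (hTint.comp_sub_right _) (hK.integrable_indicator hm) fun y => ?_
  have e1 : y - (0, x.2) = (y.1, y.2 - x.2) := by ext <;> simp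
  have hA : (y.1, y.2 - x.2) ∈ Atri (x.1, 0) ↔ y ∈ Atri x := by
    simp only [Atri, Set.mem_ofPred_eq, zero_add, sub_pos, sub_lt_iff_lt_add']
  simp only [e1]
  by_cases hy : y ∈ Atri x
  · have hyS : y ∈ Set.Ioi (0 : ℝ) ×ˢ Set.Ioi x.2 := ⟨hx1.trans hy.1, hy.2.2.1⟩
    have h1 := (hb y (hmem y hyS)).1
    rw [Set.indicator_of_mem hy] at h1
    have h2 := kerPart_le_K1 hα0 hx1.le hx2 hyS.1 hyS.2
    have h3 : 0 ≤ kerPart α x.1 (y.1, y.2 - x.2) :=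
      kerPart_nonneg hα0 hx1.le hyS.1 (sub_pos.2 hyS.2)
    rw [Set.indicator_of_mem (hA.2 hy), Set.indicator_of_mem hyS]
    exact h2.trans (le_mul_of_one_le_right (h3.trans h2) h1)
  · rw [Set.indicator_of_notMem (mt hA.1 hy)]
    refine Set.indicator_nonneg (fun z hz => ?_) y
    refine mul_nonneg ?_ (hω0 z (hmem z hz))
    exact (kerPart_nonneg (y := (z.1, z.2 - x.2)) hα0 hx1.le hz.1 (sub_pos.2 hz.2)).trans
      (kerPart_le_K1 hα0 hx1.le hx2 hz.1 hz.2)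

/-- For `α ∈ (0,1/2)` there is `δ ∈ (0,1)`, depending only on `α`, such that
for every `x` in the closure of `D⁺` with `x₁ ≤ δ` and every measurable `ω`, odd in `x₁`,
with `χ_{A(x)} ≤ ω ≤ 1` on `D⁺`:
`-∫_{(0,∞)×(x₂,∞)} K1(x,y) ω(y) dy ≤ -(1/(6·20^α·α))·x₁^{1-2α}`. -/
theorem stmt5 (α : ℝ) (hα : α ∈ Set.Ioo (0 : ℝ) (1/2)) :
    ∃ δ ∈ Set.Ioo (0 : ℝ) 1,
      ∀ x : ℝ × ℝ, x ∈ closure Dplus → x.1 ≤ δ →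
      ∀ ω : ℝ × ℝ → ℝ, Measurable ω →
        (∀ y : ℝ × ℝ, 0 < y.2 → ω (-y.1, y.2) = -ω (y.1, y.2)) →
        (∀ y ∈ Dplus, (Atri x).indicator (fun _ => (1 : ℝ)) y ≤ ω y ∧ ω y ≤ 1) →
        -∫ y in Set.Ioi (0 : ℝ) ×ˢ Set.Ioi x.2, K1 α x y * ω y ≤
          -(1 / (6 * 20 ^ α * α)) * x.1 ^ (1 - 2 * α) := by
  obtain ⟨hα0, hα1⟩ := hα
  have h20 : (1 : ℝ) ≤ 20 ^ α := Real.one_le_rpow (by norm_num) hα0.le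
  have hbase0 : (0 : ℝ) < (8 * 20 ^ α)⁻¹ := by positivity
  have hbase1 : ((8 * 20 ^ α)⁻¹ : ℝ) < 1 := inv_lt_one_of_one_lt₀ (by linarith)
  refine ⟨(8 * 20 ^ α)⁻¹ ^ (1 / (2 * α)), ⟨by positivity,
    Real.rpow_lt_one hbase0.le hbase1 (by positivity)⟩, ?_⟩
  intro x hx hxδ ω hω _ hb
  rw [Dplus, closure_prod_eq, closure_Ioi] at hx
  obtain ⟨hx1, hx2⟩ := hx
  simp only [Set.mem_Ici] at hx1 hx2
  rw [neg_mul]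
  refine neg_le_neg ?_
  rcases hx1.eq_or_lt with h0 | hpos
  · have hK : ∀ y, K1 α x y = 0 := fun y => by
      simp [K1_eq_kerPart_add_kerPart, kerPart, ← h0]
    rw [← h0, Real.zero_rpow (by linarith)]
    simp [hK]
  · refine le_integral_K1_mul hα0 hα1 hpos hx2 ?_ hω hb
    have hle : x.1 ^ (2 * α) ≤ (8 * 20 ^ α)⁻¹ := by
      refine (Real.rpow_le_rpow hx1 hxδ (by positivity)).trans ?_
      rw [← Real.rpow_mul hbase0.le, one_div_mul_cancel (by positivity), Real.rpow_one]
    calc 8 * 20 ^ α * x.1 ^ (2 * α) ≤ 8 * 20 ^ α * (8 * 20 ^ α)⁻¹ := by gcongr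
      _ = 1 := mul_inv_cancel₀ (by positivity)
end
end

section
/- Let α ∈ (0,1/2). There exists δ ∈ (0,1), depending only on α, with the following property: for every x = (x1,x2) in the closure of D⁺ with x2 ≤ δ and every measurable ω : ℝ×(0,∞) → ℝ which is odd in x1 and satisfies χ_{A(x)} ≤ ω ≤ 1 on D⁺, one has ∫_{(x1,∞)×(0,∞)} K2(x,y) ω(y) dy ≥ (1/(5·8^α·α))·x2^{1−2α}. -/
open MeasureTheory

noncomputable section

/-- The part of `K2` coming from a point and its reflection across the horizontal axis, as a function
of the horizontal offset `u` and the height `w`, for an evaluation point at height `h`. -/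
def pairKernel (α h u w : ℝ) : ℝ :=
  u / (u ^ 2 + (w - h) ^ 2) ^ (1 + α) - u / (u ^ 2 + (w + h) ^ 2) ^ (1 + α)

lemma K2_eq_pairKernel (α : ℝ) (x y : ℝ × ℝ) :
    K2 α x y = pairKernel α x.2 (y.1 - x.1) y.2 + pairKernel α x.2 (y.1 + x.1) y.2 := by
  simp only [K2, pairKernel, edist2_rpow]
  rw [show (x.1 - y.1) ^ 2 + (x.2 - y.2) ^ 2 = (y.1 - x.1) ^ 2 + (y.2 - x.2) ^ 2 by ring,
    show (x.1 - -y.1) ^ 2 + (x.2 - y.2) ^ 2 = (y.1 + x.1) ^ 2 + (y.2 - x.2) ^ 2 by ring,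
    show (x.1 - -y.1) ^ 2 + (x.2 - -y.2) ^ 2 = (y.1 + x.1) ^ 2 + (y.2 + x.2) ^ 2 by ring,
    show (x.1 - y.1) ^ 2 + (x.2 - -y.2) ^ 2 = (y.1 - x.1) ^ 2 + (y.2 + x.2) ^ 2 by ring]
  ring

lemma pairKernel_nonneg {α h u w : ℝ} (hα : 0 < α) (hh : 0 ≤ h) (hu : 0 < u) (hw : 0 ≤ w) :
    0 ≤ pairKernel α h u w := by
  have h1 : (u ^ 2 + (w - h) ^ 2) ^ (1 + α) ≤ (u ^ 2 + (w + h) ^ 2) ^ (1 + α) :=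
    Real.rpow_le_rpow (by positivity) (by nlinarith) (by linarith)
  have h2 : 0 < (u ^ 2 + (w - h) ^ 2) ^ (1 + α) := by positivity
  exact sub_nonneg.2 (div_le_div_of_nonneg_left hu.le h2 h1)

lemma measurable_pairKernel (α h : ℝ) :
    Measurable fun p : ℝ × ℝ => pairKernel α h p.1 p.2 := by
  unfold pairKernel
  fun_prop

lemma hasDerivAt_rpow_sq_add_sq {α : ℝ} (hα : 0 < α) (c u : ℝ) (hpos : 0 < u ^ 2 + c ^ 2) :
    HasDerivAt (fun t => -(1 / (2 * α)) * (t ^ 2 + c ^ 2) ^ (-α))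
      (u / (u ^ 2 + c ^ 2) ^ (1 + α)) u := by
  have h1 : HasDerivAt (fun t : ℝ => t ^ 2 + c ^ 2) (2 * u) u := by
    simpa using (hasDerivAt_pow 2 u).add_const (c ^ 2)
  have h2 := (h1.rpow_const (p := -α) (Or.inl hpos.ne')).const_mul (-(1 / (2 * α)))
  refine h2.congr_deriv ?_
  rw [show -α - 1 = -(1 + α) by ring, Real.rpow_neg hpos.le]
  field_simp

lemma continuousOn_div_rpow {α c a b : ℝ} (ha : 0 < a) :
    ContinuousOn (fun u : ℝ => u / (u ^ 2 + c ^ 2) ^ (1 + α)) (Set.Icc a b) := by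
  intro u hu
  have hu' : 0 < u := ha.trans_le hu.1
  have hpos : 0 < u ^ 2 + c ^ 2 := by positivity
  refine ContinuousAt.continuousWithinAt ?_
  refine continuousAt_id.div (ContinuousAt.rpow_const (by fun_prop) (Or.inl hpos.ne'))
    (by positivity)

lemma integral_div_rpow {α c a b : ℝ} (hα : 0 < α) (ha : 0 < a) (hab : a ≤ b) :
    ∫ u in a..b, u / (u ^ 2 + c ^ 2) ^ (1 + α) =
      1 / (2 * α) * ((a ^ 2 + c ^ 2) ^ (-α) - (b ^ 2 + c ^ 2) ^ (-α)) := by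
  rw [intervalIntegral.integral_eq_sub_of_hasDerivAt
    (f := fun t => -(1 / (2 * α)) * (t ^ 2 + c ^ 2) ^ (-α))]
  · ring
  · intro u hu
    rw [Set.uIcc_of_le hab] at hu
    have hu' : 0 < u := ha.trans_le hu.1
    exact hasDerivAt_rpow_sq_add_sq hα c u (by positivity)
  · exact ContinuousOn.intervalIntegrable (by
      rw [Set.uIcc_of_le hab]; exact continuousOn_div_rpow ha)

lemma tendsto_rpow_sq_add_sq {α : ℝ} (hα : 0 < α) (c : ℝ) :
    Filter.Tendsto (fun t : ℝ => -(1 / (2 * α)) * (t ^ 2 + c ^ 2) ^ (-α)) Filter.atTop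
      (nhds 0) := by
  have h1 : Filter.Tendsto (fun t : ℝ => t ^ 2 + c ^ 2) Filter.atTop Filter.atTop :=
    Filter.tendsto_atTop_add_const_right _ _ (Filter.tendsto_pow_atTop two_ne_zero)
  simpa using ((tendsto_rpow_neg_atTop hα).comp h1).const_mul (-(1 / (2 * α)))

lemma integrableOn_div_rpow_Ioi {α c : ℝ} (hα : 0 < α) (hc : c ≠ 0) :
    IntegrableOn (fun u : ℝ => u / (u ^ 2 + c ^ 2) ^ (1 + α)) (Set.Ioi 0) := by
  refine integrableOn_Ioi_deriv_of_nonneg'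
    (fun u _ => hasDerivAt_rpow_sq_add_sq hα c u (by positivity)) (fun u hu => ?_)
    (tendsto_rpow_sq_add_sq hα c)
  have : (0 : ℝ) < u := hu
  positivity

lemma integral_div_rpow_Ioi {α c : ℝ} (hα : 0 < α) (hc : c ≠ 0) :
    ∫ u in Set.Ioi (0 : ℝ), u / (u ^ 2 + c ^ 2) ^ (1 + α) =
      1 / (2 * α) * |c| ^ (-(2 * α)) := by
  rw [integral_Ioi_of_hasDerivAt_of_nonneg'
    (fun u _ => hasDerivAt_rpow_sq_add_sq hα c u (by positivity)) (fun u hu => ?_)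
    (tendsto_rpow_sq_add_sq hα c)]
  · rw [← sq_abs c, show -(2 * α) = (2 : ℕ) * (-α) by push_cast; ring,
      Real.rpow_natCast_mul (abs_nonneg c)]
    simp
  · have : (0 : ℝ) < u := hu
    positivity

lemma intervalIntegrable_abs_add_rpow {r : ℝ} (hr : -1 < r) (a b c : ℝ) :
    IntervalIntegrable (fun w : ℝ => |w + c| ^ r) volume a b := by
  have h0 : IntervalIntegrable (fun w : ℝ => |w| ^ r) volume (a + c) (b + c) := by
    have := (intervalIntegral.intervalIntegrable_cpow' (a := a + c) (b := b + c) (r := (r : ℂ))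
      (by simpa using hr)).norm
    simpa [Complex.norm_cpow_real] using this
  simpa using h0.comp_add_right c

lemma intervalIntegrable_rpow_sub_rpow {α : ℝ} (hα : α < 1 / 2) (h c a b : ℝ) :
    IntervalIntegrable (fun w : ℝ => (w - h) ^ (-(2 * α)) - (w + c) ^ (-(2 * α))) volume a b := by
  have hr : -1 < -(2 * α) := by linarith
  have h1 := (intervalIntegral.intervalIntegrable_rpow' (a := a - h) (b := b - h) hr).comp_sub_right h
  have h2 := (intervalIntegral.intervalIntegrable_rpow' (a := a + c) (b := b + c) hr).comp_add_right c
  simp only [sub_add_cancel, add_sub_cancel_right] at h1 h2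
  exact h1.sub h2

lemma integral_rpow_sub_rpow {α : ℝ} (hα : α < 1 / 2) (h c b : ℝ) :
    ∫ w in h..b, ((w - h) ^ (-(2 * α)) - (w + c) ^ (-(2 * α))) =
      ((b - h) ^ (1 - 2 * α) - (b + c) ^ (1 - 2 * α) + (h + c) ^ (1 - 2 * α)) / (1 - 2 * α) := by
  have hr : -1 < -(2 * α) := by linarith
  have h1 := (intervalIntegral.intervalIntegrable_rpow' (a := h - h) (b := b - h) hr).comp_sub_right h
  have h2 := (intervalIntegral.intervalIntegrable_rpow' (a := h + c) (b := b + c) hr).comp_add_right c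
  simp only [sub_add_cancel, add_sub_cancel_right] at h1 h2
  rw [intervalIntegral.integral_sub h1 h2,
    intervalIntegral.integral_comp_sub_right (fun w => w ^ (-(2 * α))) h,
    intervalIntegral.integral_comp_add_right (fun w => w ^ (-(2 * α))) c,
    integral_rpow (Or.inl hr), integral_rpow (Or.inl hr), sub_self,
    Real.zero_rpow (by linarith), show -(2 * α) + 1 = 1 - 2 * α by ring]
  ring

lemma integrableOn_rpow_sub_rpow_Ioi {α h : ℝ} (hα : 0 < α) (hα' : α < 1 / 2) (hh : 0 < h) :
    IntegrableOn (fun w : ℝ => |w - h| ^ (-(2 * α)) - |w + h| ^ (-(2 * α))) (Set.Ioi 0) := by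
  have hfin : ∀ a b : ℝ, IntervalIntegrable
      (fun w : ℝ => |w - h| ^ (-(2 * α)) - |w + h| ^ (-(2 * α))) volume a b := by
    intro a b
    have hr : -1 < -(2 * α) := by linarith
    simpa [sub_eq_add_neg] using (intervalIntegrable_abs_add_rpow hr a b (-h)).sub
      (intervalIntegrable_abs_add_rpow hr a b h)
  have hβ : 0 < 1 - 2 * α := by linarith
  rw [← Set.Ioc_union_Ioi_eq_Ioi hh.le]
  refine ((intervalIntegrable_iff_integrableOn_Ioc_of_le hh.le).1 (hfin 0 h)).union ?_
  refine integrableOn_Ioi_of_intervalIntegral_norm_bounded ((2 * h) ^ (1 - 2 * α) / (1 - 2 * α)) h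
    (fun b => ?_) Filter.tendsto_id ?_
  · rcases le_total h b with hb | hb
    · exact (intervalIntegrable_iff_integrableOn_Ioc_of_le hb).1 (hfin h b)
    · simp [hb]
  · filter_upwards [Filter.eventually_ge_atTop h] with b hb
    have hpt : ∫ w in h..b, ‖|w - h| ^ (-(2 * α)) - |w + h| ^ (-(2 * α))‖ =
        ∫ w in h..b, ((w - h) ^ (-(2 * α)) - (w + h) ^ (-(2 * α))) := by
      refine intervalIntegral.integral_congr_Ioo_of_le hb fun w hw => ?_
      have h1 : 0 < w - h := sub_pos.2 hw.1
      have h2 : 0 < w + h := by linarith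
      rw [abs_of_pos h1, abs_of_pos h2, Real.norm_of_nonneg]
      exact sub_nonneg.2 (Real.rpow_le_rpow_of_nonpos h1 (by linarith) (by linarith))
    rw [id, hpt, integral_rpow_sub_rpow hα', ← two_mul]
    have : (b - h) ^ (1 - 2 * α) ≤ (b + h) ^ (1 - 2 * α) :=
      Real.rpow_le_rpow (by linarith) (by linarith) hβ.le
    gcongr
    linarith

lemma integrableOn_pairKernel {α h : ℝ} (hα : 0 < α) (hα' : α < 1 / 2) (hh : 0 < h) :
    IntegrableOn (fun p : ℝ × ℝ => pairKernel α h p.1 p.2) (Set.Ioi 0 ×ˢ Set.Ioi 0) := by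
  rw [IntegrableOn, Measure.volume_eq_prod, ← Measure.prod_restrict,
    integrable_prod_iff' (measurable_pairKernel α h).aestronglyMeasurable]
  have hne : ∀ᵐ w ∂(volume.restrict (Set.Ioi (0 : ℝ))), w ≠ h :=
    ae_restrict_of_ae (Measure.ae_ne volume h)
  have hpos : ∀ᵐ w ∂(volume.restrict (Set.Ioi (0 : ℝ))), 0 < w :=
    ae_restrict_mem measurableSet_Ioi
  constructor
  · filter_upwards [hne, hpos] with w hw hw0
    exact (integrableOn_div_rpow_Ioi hα (sub_ne_zero.2 hw)).sub
      (integrableOn_div_rpow_Ioi hα (by positivity))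
  · refine ((integrableOn_rpow_sub_rpow_Ioi hα hα' hh).const_mul (1 / (2 * α))).congr ?_
    filter_upwards [hne, hpos] with w hw hw0
    have hnorm : ∫ u in Set.Ioi (0 : ℝ), ‖pairKernel α h u w‖ =
        ∫ u in Set.Ioi (0 : ℝ), pairKernel α h u w :=
      setIntegral_congr_fun measurableSet_Ioi fun u hu =>
        Real.norm_of_nonneg (pairKernel_nonneg hα hh.le hu hw0.le)
    rw [hnorm]
    unfold pairKernel
    rw [integral_sub (integrableOn_div_rpow_Ioi hα (sub_ne_zero.2 hw))
      (integrableOn_div_rpow_Ioi hα (by positivity)),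
      integral_div_rpow_Ioi hα (sub_ne_zero.2 hw), integral_div_rpow_Ioi hα (by positivity)]
    ring

lemma rpow_neg_sub_rpow_neg_le_s6 {α p q : ℝ} (hα : 0 < α) (hα' : α ≤ 1) (hp : 1 ≤ p) (hpq : p ≤ q) :
    p ^ (-α) - q ^ (-α) ≤ 1 - p / q := by
  have hp0 : 0 < p := by linarith
  have hq0 : 0 < q := by linarith
  have h1 : p / q ≤ (p / q) ^ α := by
    simpa using Real.rpow_le_rpow_of_exponent_ge (by positivity) ((div_le_one hq0).2 hpq) hα'
  have h2 : (p / q) ^ α ≤ 1 := Real.rpow_le_one (by positivity) ((div_le_one hq0).2 hpq) hα.le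
  have h3 : p ^ (-α) ≤ 1 := Real.rpow_le_one_of_one_le_of_nonpos hp (by linarith)
  have h4 : q ^ (-α) = p ^ (-α) * (p / q) ^ α := by
    rw [Real.div_rpow hp0.le hq0.le, Real.rpow_neg hp0.le, Real.rpow_neg hq0.le]
    field_simp
  have h5 : 0 ≤ p ^ (-α) := by positivity
  rw [h4]
  nlinarith

lemma le_integral_pairKernel {α h w : ℝ} (hα : 0 < α) (hα' : α < 1 / 2) (hh : 0 < h)
    (hw : w ∈ Set.Ioo h (h + 1)) :
    1 / (2 * α) * (2 ^ (-α) * ((w - h) ^ (-(2 * α)) - w ^ (-(2 * α))) - 2 * h) ≤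
      ∫ u in (w - h)..1, pairKernel α h u w := by
  have hv : 0 < w - h := sub_pos.2 hw.1
  have hw0 : 0 < w := hh.trans hw.1
  have hv1 : w - h ≤ 1 := by linarith [hw.2]
  have hint : ∀ c : ℝ, IntervalIntegrable (fun u : ℝ => u / (u ^ 2 + c ^ 2) ^ (1 + α)) volume
      (w - h) 1 := fun c => ContinuousOn.intervalIntegrable (by
        rw [Set.uIcc_of_le hv1]; exact continuousOn_div_rpow hv)
  have hsq : ∀ t : ℝ, 0 < t → (2 * t ^ 2) ^ (-α) = 2 ^ (-α) * t ^ (-(2 * α)) := by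
    intro t ht
    rw [Real.mul_rpow (by positivity) (by positivity), show -(2 * α) = (2 : ℕ) * (-α) by
      push_cast; ring, Real.rpow_natCast_mul ht.le]
  unfold pairKernel
  rw [intervalIntegral.integral_sub (hint _) (hint _), integral_div_rpow hα hv hv1,
    integral_div_rpow hα hv hv1, ← mul_sub]
  refine mul_le_mul_of_nonneg_left ?_ (by positivity)
  have h1 : ((w - h) ^ 2 + (w + h) ^ 2) ^ (-α) ≤ 2 ^ (-α) * w ^ (-(2 * α)) := by
    rw [← hsq w hw0]
    exact Real.rpow_le_rpow_of_nonpos (by positivity) (by nlinarith) (by linarith)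
  have h2 := rpow_neg_sub_rpow_neg_le_s6 (p := 1 ^ 2 + (w - h) ^ 2) (q := 1 ^ 2 + (w + h) ^ 2) hα
    (by linarith) (by nlinarith) (by nlinarith)
  have h3 : 1 - (1 ^ 2 + (w - h) ^ 2) / (1 ^ 2 + (w + h) ^ 2) ≤ 2 * h := by
    rw [one_sub_div (by positivity), div_le_iff₀ (by positivity)]
    nlinarith [mul_nonneg hh.le (sq_nonneg (w + h - 1)), mul_pos hh hh]
  have key : ∀ a b c d e : ℝ, c ≤ e → b - d ≤ 2 * h → a - e - 2 * h ≤ a - b - (c - d) := by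
    intros
    linarith
  rw [← two_mul, hsq _ hv, mul_sub]
  exact key _ _ _ _ _ h1 (h2.trans h3)

lemma le_integral_indicator_pairKernel {α h : ℝ} (hα : 0 < α) (hα' : α < 1 / 2) (hh : 0 < h) :
    1 / (2 * α) * (2 ^ (-α) * h ^ (1 - 2 * α) - 3 * h) ≤
      ∫ p : ℝ × ℝ, (Atri (0, h)).indicator (fun p => pairKernel α h p.1 p.2) p := by
  have hmeas := measurableSet_Atri (0, h)
  have hsub : Atri (0, h) ⊆ Set.Ioi 0 ×ˢ Set.Ioi 0 := fun p hp => ⟨hp.1, hh.trans hp.2.2.1⟩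
  have hint : Integrable ((Atri (0, h)).indicator fun p : ℝ × ℝ => pairKernel α h p.1 p.2) :=
    ((integrableOn_pairKernel hα hα' hh).mono_set hsub).integrable_indicator hmeas
  rw [Measure.volume_eq_prod] at hint ⊢
  rw [integral_prod_symm _ hint]
  have hle : h ≤ h + 1 := by linarith
  set g : ℝ → ℝ := fun w =>
    1 / (2 * α) * (2 ^ (-α) * ((w - h) ^ (-(2 * α)) - w ^ (-(2 * α))) - 2 * h) with hg
  have hrint : IntervalIntegrable (fun w : ℝ => (w - h) ^ (-(2 * α)) - w ^ (-(2 * α))) volume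
      h (h + 1) := by
    simpa using intervalIntegrable_rpow_sub_rpow hα' h 0 h (h + 1)
  have hgint : IntervalIntegrable g volume h (h + 1) :=
    ((hrint.const_mul _).sub intervalIntegrable_const).const_mul _
  have hgval : 1 / (2 * α) * (2 ^ (-α) * h ^ (1 - 2 * α) - 3 * h) ≤ ∫ w in h..h + 1, g w := by
    have hval := integral_rpow_sub_rpow hα' h 0 (h + 1)
    simp only [add_zero, add_sub_cancel_left, Real.one_rpow] at hval
    rw [hg, intervalIntegral.integral_const_mul,
      intervalIntegral.integral_sub (hrint.const_mul _) intervalIntegrable_const,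
      intervalIntegral.integral_const_mul, hval, intervalIntegral.integral_const]
    refine mul_le_mul_of_nonneg_left ?_ (by positivity)
    have hβ : 0 < 1 - 2 * α := by linarith
    have hber : (1 + h) ^ (1 - 2 * α) ≤ 1 + (1 - 2 * α) * h :=
      rpow_one_add_le_one_add_mul_self (by linarith) hβ.le (by linarith)
    have hp : 0 ≤ h ^ (1 - 2 * α) := by positivity
    have h2 : h ^ (1 - 2 * α) - h ≤
        (1 - (h + 1) ^ (1 - 2 * α) + h ^ (1 - 2 * α)) / (1 - 2 * α) := by
      rw [le_div_iff₀ hβ, add_comm h 1]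
      nlinarith
    have h3 : (2 : ℝ) ^ (-α) ≤ 1 :=
      Real.rpow_le_one_of_one_le_of_nonpos (by norm_num) (by linarith)
    have h4 : (0 : ℝ) < 2 ^ (-α) := by positivity
    have h5 := mul_le_mul_of_nonneg_left h2 h4.le
    simp only [add_sub_cancel_left, one_smul]
    nlinarith
  refine hgval.trans ?_
  rw [intervalIntegral.integral_of_le hle, integral_Ioc_eq_integral_Ioo,
    ← integral_indicator measurableSet_Ioo]
  refine integral_mono ?_ hint.integral_prod_right fun w => ?_
  · exact IntegrableOn.integrable_indicator
      ((intervalIntegrable_iff_integrableOn_Ioo_of_le hle).1 hgint) measurableSet_Ioo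
  · by_cases hw : w ∈ Set.Ioo h (h + 1)
    · simp only []
      rw [Set.indicator_of_mem hw]
      refine (le_integral_pairKernel hα hα' hh hw).trans_eq ?_
      rw [intervalIntegral.integral_of_le (by linarith [hw.2]), integral_Ioc_eq_integral_Ioo,
        ← integral_indicator measurableSet_Ioo]
      congr 1
      ext u
      have : u ∈ Set.Ioo (w - h) 1 ↔ (u, w) ∈ Atri (0, h) := by
        have := hw.1
        simp only [Set.mem_Ioo, Atri, Set.mem_ofPred_eq]
        grind
      by_cases hu : u ∈ Set.Ioo (w - h) 1
      · rw [Set.indicator_of_mem hu, Set.indicator_of_mem (this.1 hu)]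
      · rw [Set.indicator_of_notMem hu, Set.indicator_of_notMem (this.not.1 hu)]
    · simp only []
      rw [Set.indicator_of_notMem hw]
      refine integral_nonneg fun u => Set.indicator_nonneg (fun p hp => ?_) _
      exact pairKernel_nonneg hα hh.le (hsub hp).1 (le_of_lt (hsub hp).2)

lemma integrableOn_K2 {α : ℝ} (hα : 0 < α) (hα' : α < 1 / 2) {x : ℝ × ℝ} (hx1 : 0 ≤ x.1)
    (hx2 : 0 < x.2) : IntegrableOn (K2 α x) (Set.Ioi x.1 ×ˢ Set.Ioi 0) := by
  have hI := (integrableOn_pairKernel hα hα' hx2).integrable_indicator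
    (measurableSet_Ioi.prod measurableSet_Ioi)
  have h1 := (hI.comp_sub_right (x.1, 0)).add (hI.comp_add_right (x.1, 0))
  refine h1.integrableOn.congr_fun (fun y hy => ?_) (measurableSet_Ioi.prod measurableSet_Ioi)
  obtain ⟨hy1, hy2⟩ := hy
  simp only [Set.mem_Ioi] at hy1 hy2
  simp only [Pi.add_apply]
  rw [K2_eq_pairKernel, Set.indicator_of_mem, Set.indicator_of_mem]
  · simp
  · refine ⟨?_, ?_⟩ <;> simp <;> linarith
  · refine ⟨?_, ?_⟩ <;> simp <;> linarith

/-- For `α ∈ (0,1/2)` there is `δ ∈ (0,1)`, depending only on `α`, such that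
for every `x` in the closure of `D⁺` with `x₂ ≤ δ` and every measurable `ω`, odd in `x₁`,
with `χ_{A(x)} ≤ ω ≤ 1` on `D⁺`:
`∫_{(x₁,∞)×(0,∞)} K2(x,y) ω(y) dy ≥ (1/(5·8^α·α))·x₂^{1-2α}`. -/
theorem stmt6 (α : ℝ) (hα : α ∈ Set.Ioo (0 : ℝ) (1/2)) :
    ∃ δ ∈ Set.Ioo (0 : ℝ) 1,
      ∀ x : ℝ × ℝ, x ∈ closure Dplus → x.2 ≤ δ →
      ∀ ω : ℝ × ℝ → ℝ, Measurable ω →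
        (∀ y : ℝ × ℝ, 0 < y.2 → ω (-y.1, y.2) = -ω (y.1, y.2)) →
        (∀ y ∈ Dplus, (Atri x).indicator (fun _ => (1 : ℝ)) y ≤ ω y ∧ ω y ≤ 1) →
        ∫ y in Set.Ioi x.1 ×ˢ Set.Ioi (0 : ℝ), K2 α x y * ω y ≥
          1 / (5 * 8 ^ α * α) * x.2 ^ (1 - 2 * α) := by
  obtain ⟨hα0, hα1⟩ := hα
  have h2α : (2 : ℝ) ^ (-α) ≤ 1 :=
    Real.rpow_le_one_of_one_le_of_nonpos (by norm_num) (by linarith)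
  refine ⟨(2 ^ (-α) / 5) ^ (2 * α)⁻¹, ⟨by positivity,
    Real.rpow_lt_one (by positivity) (by linarith) (by positivity)⟩, ?_⟩
  intro x hx hxδ ω hω _ hbound
  rw [Dplus, closure_prod_eq, closure_Ioi] at hx
  obtain ⟨hx1, hx2⟩ := hx
  simp only [Set.mem_Ici] at hx1 hx2
  have hS : MeasurableSet (Set.Ioi x.1 ×ˢ Set.Ioi (0 : ℝ)) :=
    measurableSet_Ioi.prod measurableSet_Ioi
  have hSD : Set.Ioi x.1 ×ˢ Set.Ioi (0 : ℝ) ⊆ Dplus := fun y hy => ⟨hx1.trans_lt hy.1, hy.2⟩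
  have hω0 : ∀ y ∈ Dplus, 0 ≤ ω y := fun y hy =>
    (Set.indicator_nonneg (fun _ _ => zero_le_one) y).trans (hbound y hy).1
  have hpair : ∀ y ∈ Set.Ioi x.1 ×ˢ Set.Ioi (0 : ℝ),
      0 ≤ pairKernel α x.2 (y.1 - x.1) y.2 ∧ pairKernel α x.2 (y.1 - x.1) y.2 ≤ K2 α x y := by
    intro y hy
    have hy1 : x.1 < y.1 := hy.1
    rw [K2_eq_pairKernel]
    exact ⟨pairKernel_nonneg hα0 hx2 (by linarith) (le_of_lt hy.2),
      le_add_of_nonneg_right (pairKernel_nonneg hα0 hx2 (by linarith) (le_of_lt hy.2))⟩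
  rcases hx2.eq_or_lt with h0 | hpos
  · rw [← h0, Real.zero_rpow (by linarith), mul_zero]
    exact setIntegral_nonneg hS fun y hy =>
      mul_nonneg ((hpair y hy).1.trans (hpair y hy).2) (hω0 y (hSD hy))
  have hAS : Atri x ⊆ Set.Ioi x.1 ×ˢ Set.Ioi (0 : ℝ) := fun y hy => ⟨hy.1, hpos.trans hy.2.2.1⟩
  have hA := measurableSet_Atri x
  have hK := integrableOn_K2 hα0 hα1 hx1 hpos
  have hshift : Measurable fun y : ℝ × ℝ => pairKernel α x.2 (y.1 - x.1) y.2 :=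
    (measurable_pairKernel α x.2).comp (g := fun p : ℝ × ℝ => pairKernel α x.2 p.1 p.2)
      (f := fun y : ℝ × ℝ => (y.1 - x.1, y.2)) (by fun_prop)
  have hintω : IntegrableOn (fun y => K2 α x y * ω y) (Set.Ioi x.1 ×ˢ Set.Ioi (0 : ℝ)) := by
    refine hK.mul_bdd (c := 1) hω.aestronglyMeasurable ?_
    filter_upwards [ae_restrict_mem hS] with y hy
    rw [Real.norm_of_nonneg (hω0 y (hSD hy))]
    exact (hbound y (hSD hy)).2
  have hintA : IntegrableOn (fun y : ℝ × ℝ => pairKernel α x.2 (y.1 - x.1) y.2)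
      (Set.Ioi x.1 ×ˢ Set.Ioi (0 : ℝ)) := by
    refine hK.mono' hshift.aestronglyMeasurable ?_
    filter_upwards [ae_restrict_mem hS] with y hy
    rw [Real.norm_of_nonneg (hpair y hy).1]
    exact (hpair y hy).2
  have hmono : ∫ y in Atri x, pairKernel α x.2 (y.1 - x.1) y.2 ≤
      ∫ y in Set.Ioi x.1 ×ˢ Set.Ioi (0 : ℝ), K2 α x y * ω y := by
    refine (setIntegral_mono_on (hintA.mono_set hAS) (hintω.mono_set hAS) hA fun y hy => ?_).trans
      (setIntegral_mono_set hintω ?_ hAS.eventuallyLE)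
    · have h1 := (hbound y (hSD (hAS hy))).1
      rw [Set.indicator_of_mem hy] at h1
      have h2 := hpair y (hAS hy)
      nlinarith
    · filter_upwards [ae_restrict_mem hS] with y hy
      exact mul_nonneg ((hpair y hy).1.trans (hpair y hy).2) (hω0 y (hSD hy))
  have htrans : ∫ y in Atri x, pairKernel α x.2 (y.1 - x.1) y.2 =
      ∫ p : ℝ × ℝ, (Atri (0, x.2)).indicator (fun p => pairKernel α x.2 p.1 p.2) p := by
    rw [← integral_indicator hA, ← integral_sub_right_eq_self
      ((Atri (0, x.2)).indicator fun p => pairKernel α x.2 p.1 p.2) ((x.1, 0) : ℝ × ℝ)]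
    congr 1
    ext y
    have hiff : y ∈ Atri x ↔ y - (x.1, 0) ∈ Atri (0, x.2) := by
      simp only [Atri, Set.mem_ofPred_eq, Prod.fst_sub, Prod.snd_sub]
      grind
    by_cases hy : y ∈ Atri x
    · rw [Set.indicator_of_mem hy, Set.indicator_of_mem (hiff.1 hy)]
      simp
    · rw [Set.indicator_of_notMem hy, Set.indicator_of_notMem (hiff.not.1 hy)]
  refine le_trans ?_ ((le_integral_indicator_pairKernel hα0 hα1 hpos).trans
    (htrans.symm.trans_le hmono))
  have hsmall : x.2 ^ (2 * α) ≤ 2 ^ (-α) / 5 :=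
    (Real.le_rpow_inv_iff_of_pos hx2 (by positivity) (by positivity)).1 hxδ
  have hsplit : x.2 = x.2 ^ (1 - 2 * α) * x.2 ^ (2 * α) := by
    rw [← Real.rpow_add hpos]
    simp
  have hβ : 0 < x.2 ^ (1 - 2 * α) := by positivity
  have h8 : (8 ^ α)⁻¹ ≤ (2 : ℝ) ^ (-α) := by
    rw [Real.rpow_neg (by norm_num)]
    gcongr
    norm_num
  have hlin : x.2 ≤ x.2 ^ (1 - 2 * α) * (2 ^ (-α) / 5) :=
    hsplit.trans_le (mul_le_mul_of_nonneg_left hsmall hβ.le)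
  calc 1 / (5 * 8 ^ α * α) * x.2 ^ (1 - 2 * α)
      = 1 / (2 * α) * (2 / 5 * ((8 ^ α)⁻¹ * x.2 ^ (1 - 2 * α))) := by field_simp
    _ ≤ 1 / (2 * α) * (2 / 5 * (2 ^ (-α) * x.2 ^ (1 - 2 * α))) := by gcongr
    _ ≤ 1 / (2 * α) * (2 ^ (-α) * x.2 ^ (1 - 2 * α) - 3 * x.2) := by
      refine mul_le_mul_of_nonneg_left ?_ (by positivity)
      linarith
end
end

section
/- Let γ ∈ (0,1], let Ω ⊆ ℝ×(0,∞) be a bounded open set, and let φ : ℝ² → ℝ be differentiable on the closure of Ω with φ > 0 on Ω, φ = 0 on ∂Ω, and with gradient satisfying |∇φ(x) − ∇φ(y)| ≤ A·|x−y|^γ for all x, y in the closure of Ω, where A > 0. Then for every point P = (p1,p2) ∈ ∂Ω, one has |∂₁φ(P)| ≤ 2·( A · p2^γ · |∇φ(P)|^γ )^{1/(1+γ)}. -/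
noncomputable section

/-- The plane with the Euclidean norm. -/
abbrev E2 := EuclideanSpace ℝ (Fin 2)

/-- A segment that starts in the open set `Ω`, and along which a function positive on `Ω` and zero
on its frontier has positive directional derivative, never leaves `Ω`. -/
lemma add_smul_mem_of_inner_gradient_pos {F : Type*} [NormedAddCommGroup F]
    [InnerProductSpace ℝ F] [CompleteSpace F] {Ω : Set F} (hΩ : IsOpen Ω) {φ : F → ℝ} {g : F → F}
    (hgrad : ∀ x ∈ closure Ω, HasGradientWithinAt φ (g x) (closure Ω) x)
    (hpos : ∀ x ∈ Ω, 0 < φ x) (hzero : ∀ x ∈ frontier Ω, φ x = 0)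
    {x d : F} (hx : x ∈ Ω) {t : ℝ} (ht : 0 ≤ t)
    (hd : ∀ r ∈ Set.Icc 0 t, x + r • d ∈ Ω → 0 < inner ℝ (g (x + r • d)) d) :
    x + t • d ∈ Ω := by
  by_contra hout
  have hcont : Continuous fun r : ℝ => x + r • d := by fun_prop
  set S : Set ℝ := Set.Icc 0 t ∩ (fun r : ℝ => x + r • d) ⁻¹' Ωᶜ
  have hScompact : IsCompact S :=
    isCompact_Icc.inter_right (hΩ.isClosed_compl.preimage hcont)
  obtain ⟨τ, ⟨⟨hτ0, hτt⟩, hτout⟩, hτmin⟩ := hScompact.exists_isLeast ⟨t, ⟨ht, le_rfl⟩, hout⟩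
  have hin : ∀ r ∈ Set.Ico 0 τ, x + r • d ∈ Ω := by
    intro r hr
    by_contra hr'
    exact absurd (hτmin ⟨⟨hr.1, hr.2.le.trans hτt⟩, hr'⟩) (not_le.2 hr.2)
  have hτpos : 0 < τ := by
    refine lt_of_le_of_ne hτ0 fun h => hτout ?_
    simpa [← h] using hx
  have hτcl : x + τ • d ∈ closure Ω := by
    have hmem : τ ∈ closure (Set.Ico 0 τ) := by
      rw [closure_Ico hτpos.ne]; exact ⟨hτ0, le_rfl⟩
    exact map_mem_closure (f := fun r : ℝ => x + r • d) hcont hmem hin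
  have hφτ : φ (x + τ • d) = 0 := hzero _ (by rw [hΩ.frontier_eq]; exact ⟨hτcl, hτout⟩)
  have hcl : Set.MapsTo (fun r : ℝ => x + r • d) (Set.Icc 0 τ) (closure Ω) := by
    intro r hr
    rcases hr.2.eq_or_lt with h | h
    · simpa [h] using hτcl
    · exact subset_closure (hin r ⟨hr.1, h⟩)
  have hφc : ContinuousOn φ (closure Ω) := fun y hy => (hgrad y hy).continuousWithinAt
  have hderiv : ∀ r ∈ Set.Ioo 0 τ,
      HasDerivAt (fun r : ℝ => φ (x + r • d)) (inner ℝ (g (x + r • d)) d) r := by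
    intro r hr
    have hrΩ := hin r ⟨hr.1.le, hr.2⟩
    have hf := (hgrad _ (subset_closure hrΩ)).hasFDerivWithinAt.hasFDerivAt
      (Filter.mem_of_superset (hΩ.mem_nhds hrΩ) subset_closure)
    have hline : HasDerivAt (fun r : ℝ => x + r • d) d r := by
      simpa using ((hasDerivAt_id r).smul_const d).const_add x
    have hcomp := hf.comp_hasDerivAt r hline
    rw [InnerProductSpace.toDual_apply_apply] at hcomp
    exact hcomp
  obtain ⟨r, hr, hslope⟩ := exists_hasDerivAt_eq_slope (fun r : ℝ => φ (x + r • d)) _ hτpos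
    (hφc.comp hcont.continuousOn hcl) hderiv
  have hgr := hd r ⟨hr.1.le, hr.2.le.trans hτt⟩ (hin r ⟨hr.1.le, hr.2⟩)
  have hφx := hpos x hx
  rw [hslope] at hgr
  simp only [hφτ, zero_smul, add_zero, sub_zero, zero_sub] at hgr
  rw [div_pos_iff_of_pos_right hτpos] at hgr
  linarith

/-- The unit vector bisecting the angle between `v` and the downward vertical direction. -/
lemma exists_bisector_with_downward {v : E2} (hv : v 0 ≠ 0) :
    ∃ (s : ℝ) (d : E2), 0 < s ∧ ‖d‖ = 1 ∧ d 1 = -s ∧ inner ℝ v d = s * ‖v‖ ∧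
      |v 0| / 2 ≤ s * ‖v‖ := by
  have hsq : ‖v‖ ^ 2 = v 0 ^ 2 + v 1 ^ 2 := by
    simp [EuclideanSpace.norm_sq_eq]
  have hv0 : 0 < v 0 ^ 2 := by positivity
  have hn : 0 < ‖v‖ := norm_pos_iff.2 fun h => hv (by simp [h])
  set n := ‖v‖
  have hv1 : v 1 < n := by nlinarith
  set s := √((1 - v 1 / n) / 2)
  have harg : 0 < (1 - v 1 / n) / 2 := by
    have : v 1 / n < 1 := (div_lt_one hn).2 hv1
    linarith
  have hspos : 0 < s := Real.sqrt_pos.2 harg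
  have hs2 : s ^ 2 = (1 - v 1 / n) / 2 := Real.sq_sqrt harg.le
  have hv1eq : v 1 = n * (1 - 2 * s ^ 2) := by rw [hs2]; field_simp; ring
  set c := v 0 / (2 * s * n) with hc
  have hv0eq : v 0 = 2 * s * n * c := by rw [hc]; field_simp
  have hcs : c ^ 2 + s ^ 2 = 1 := by
    have h : 4 * s ^ 2 * n ^ 2 * (c ^ 2 + s ^ 2 - 1) = 0 := by
      rw [hv0eq, hv1eq] at hsq
      linear_combination -hsq
    have h' : 4 * s ^ 2 * n ^ 2 ≠ 0 := by positivity
    linarith [(mul_eq_zero.1 h).resolve_left h']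
  refine ⟨s, !₂[c, -s], hspos, ?_, by simp, ?_, ?_⟩
  · rw [EuclideanSpace.norm_eq]
    simp [hcs]
  · have hinner : inner ℝ v !₂[c, -s] = c * v 0 + -s * v 1 := by
      simp [PiLp.inner_apply, Fin.sum_univ_two]
    rw [hinner, hv0eq, hv1eq]
    linear_combination 2 * s * n * hcs
  · have hc1 : |c| ≤ 1 := abs_le_one_iff_mul_self_le_one.2 (by nlinarith)
    rw [hv0eq, abs_mul, abs_of_pos (by positivity : 0 < 2 * s * n)]
    nlinarith [mul_pos hspos hn]

/-- Let `γ ∈ (0,1]`, let `Ω ⊆ ℝ×(0,∞)` be bounded and open, and let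
`φ` be differentiable on the closure of `Ω` (with gradient `g`), positive on `Ω`, zero on `∂Ω`,
with `|∇φ(x) - ∇φ(y)| ≤ A·|x-y|^γ` on the closure of `Ω`, where `A > 0`.  Then for every
`P = (p₁,p₂) ∈ ∂Ω` one has `|∂₁φ(P)| ≤ 2·(A·p₂^γ·|∇φ(P)|^γ)^{1/(1+γ)}`. -/
theorem stmt9 (γ A : ℝ) (hγ : γ ∈ Set.Ioc (0 : ℝ) 1) (hA : 0 < A)
    (Ω : Set E2) (hΩopen : IsOpen Ω) (hΩbdd : Bornology.IsBounded Ω)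
    (hΩD : Ω ⊆ {x : E2 | 0 < x 1})
    (φ : E2 → ℝ) (g : E2 → E2)
    (hgrad : ∀ x ∈ closure Ω, HasGradientWithinAt φ (g x) (closure Ω) x)
    (hHolder : ∀ x ∈ closure Ω, ∀ y ∈ closure Ω, ‖g x - g y‖ ≤ A * ‖x - y‖ ^ γ)
    (hpos : ∀ x ∈ Ω, 0 < φ x)
    (hzero : ∀ x ∈ frontier Ω, φ x = 0) :
    ∀ P ∈ frontier Ω, |g P 0| ≤ 2 * (A * (P 1) ^ γ * ‖g P‖ ^ γ) ^ (1 / (1 + γ)) := by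
  intro P hP
  obtain ⟨hγ0, -⟩ := hγ
  have hPcl : P ∈ closure Ω := frontier_subset_closure hP
  have hP1 : 0 ≤ P 1 := by
    have hclosed : IsClosed {x : E2 | 0 ≤ x 1} :=
      isClosed_le continuous_const (by fun_prop)
    have hsub : Ω ⊆ {x : E2 | 0 ≤ x 1} :=
      hΩD.trans (Set.ofPred_subset_ofPred.2 fun _ => le_of_lt)
    exact closure_minimal hsub hclosed hPcl
  have hrhs : 0 ≤ A * (P 1) ^ γ * ‖g P‖ ^ γ := by positivity
  rcases eq_or_ne (g P 0) 0 with h0 | h0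
  · rw [h0, abs_zero]
    positivity
  obtain ⟨s, d, hs, hd, hd1, hinner, hle⟩ := exists_bisector_with_downward h0
  have hn : 0 < ‖g P‖ := norm_pos_iff.2 fun h => h0 (by simp [h])
  have hkey : s * ‖g P‖ ≤ A * (P 1 / s) ^ γ := by
    by_contra! hlt
    have hcont : Continuous fun x : E2 => A * (x 1 / s + ‖x - P‖) ^ γ :=
      continuous_const.mul ((by fun_prop : Continuous fun x : E2 => x 1 / s + ‖x - P‖).rpow_const
        fun _ => Or.inr hγ0.le)
    have hnear : {x : E2 | A * (x 1 / s + ‖x - P‖) ^ γ < s * ‖g P‖} ∈ nhds P :=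
      (isOpen_lt hcont continuous_const).mem_nhds (by simpa using hlt)
    obtain ⟨x, hxlt, hxΩ⟩ := mem_closure_iff_nhds.1 hPcl _ hnear
    have hx1 : 0 < x 1 := hΩD hxΩ
    have hend := add_smul_mem_of_inner_gradient_pos hΩopen hgrad hpos hzero hxΩ
      (d := d) (div_pos hx1 hs).le (by
        intro r hr hrΩ
        have hH := hHolder P hPcl _ (subset_closure hrΩ)
        have hdist : ‖P - (x + r • d)‖ ≤ x 1 / s + ‖x - P‖ := by
          calc ‖P - (x + r • d)‖ = ‖(x - P) + r • d‖ := by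
                rw [← norm_neg]; congr 1; abel
            _ ≤ ‖x - P‖ + ‖r • d‖ := norm_add_le _ _
            _ = ‖x - P‖ + r := by rw [norm_smul, hd, mul_one, Real.norm_of_nonneg hr.1]
            _ ≤ x 1 / s + ‖x - P‖ := by linarith [hr.2]
        have hmono : A * ‖P - (x + r • d)‖ ^ γ ≤ A * (x 1 / s + ‖x - P‖) ^ γ := by gcongr
        have hCS := real_inner_le_norm (g P - g (x + r • d)) d
        rw [inner_sub_left, hinner, hd, mul_one] at hCS
        have hxlt' : A * (x 1 / s + ‖x - P‖) ^ γ < s * ‖g P‖ := hxlt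
        linarith)
    have hlast : 0 < (x + (x 1 / s) • d) 1 := hΩD hend
    have hlast0 : (x + (x 1 / s) • d) 1 = 0 := by
      simp only [PiLp.add_apply, PiLp.smul_apply, smul_eq_mul, hd1]
      field_simp
      ring
    exact hlast.ne' hlast0
  have hpow : (s * ‖g P‖) ^ (1 + γ) ≤ A * (P 1) ^ γ * ‖g P‖ ^ γ := by
    have hsn : 0 < s * ‖g P‖ := mul_pos hs hn
    calc (s * ‖g P‖) ^ (1 + γ) = s * ‖g P‖ * (s * ‖g P‖) ^ γ := by
          rw [Real.rpow_add hsn, Real.rpow_one]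
      _ ≤ A * (P 1 / s) ^ γ * (s * ‖g P‖) ^ γ := by gcongr
      _ = A * (P 1) ^ γ * ‖g P‖ ^ γ := by
          have hsγ : s ^ γ ≠ 0 := (Real.rpow_pos_of_pos hs γ).ne'
          rw [Real.div_rpow hP1 hs.le, Real.mul_rpow hs.le hn.le]
          field_simp
  have hroot : s * ‖g P‖ ≤ (A * (P 1) ^ γ * ‖g P‖ ^ γ) ^ (1 / (1 + γ)) := by
    rw [one_div]
    exact (Real.le_rpow_inv_iff_of_pos (by positivity) hrhs (by positivity)).2 hpow
  linarith
end
end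

section
/- Let γ ∈ (0,1] and let φ : ℝ² → ℝ be differentiable with |∇φ(x) − ∇φ(y)| ≤ Ã·|x−y|^γ for all x, y ∈ ℝ², where 0 < Ã < ∞. Let P ∈ ℝ² satisfy φ(P) = 0 and ∇φ(P) ≠ 0, set n := ∇φ(P)/|∇φ(P)| and r := ( |∇φ(P)|/(2Ã) )^{1/γ}. Then for every unit vector ν and every ρ ∈ (0,r) with (ρ/r)^γ < 2|ν·n|: if ν·n ≥ 0 then φ(P + ρν) > 0, and if ν·n ≤ 0 then φ(P + ρν) < 0. -/
open RealInnerProductSpace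

noncomputable section

/-- Mean value theorem along a segment in direction `v`, in terms of the gradient. -/
theorem exists_add_smul_sub_eq_mul_inner_gradient {F : Type*} [NormedAddCommGroup F]
    [InnerProductSpace ℝ F] [CompleteSpace F] {f : F → ℝ} (hf : Differentiable ℝ f)
    (x v : F) {t : ℝ} (ht : 0 < t) :
    ∃ s ∈ Set.Ioo 0 t, f (x + t • v) - f x = t * ⟪v, gradient f (x + s • v)⟫ := by
  have hd : ∀ s : ℝ, HasDerivAt (fun s : ℝ => f (x + s • v)) ⟪v, gradient f (x + s • v)⟫ s := by
    intro s
    have hline : HasDerivAt (fun s : ℝ => x + s • v) v s := by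
      simpa using ((hasDerivAt_id s).smul_const v).const_add x
    have hcomp := (hf (x + s • v)).hasGradientAt.hasFDerivAt.comp_hasDerivAt s hline
    rw [InnerProductSpace.toDual_apply_apply, real_inner_comm] at hcomp
    exact hcomp
  obtain ⟨s, hs, hslope⟩ := exists_hasDerivAt_eq_slope (fun s : ℝ => f (x + s • v))
    (fun s => ⟪v, gradient f (x + s • v)⟫) ht
    (fun s _ => (hd s).continuousAt.continuousWithinAt) (fun s _ => hd s)
  refine ⟨s, hs, ?_⟩
  simp only [hslope, zero_smul, add_zero, sub_zero]
  field_simp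

/-- Let `γ ∈ (0,1]` and `φ : ℝ² → ℝ` differentiable with
`|∇φ(x) - ∇φ(y)| ≤ Ã·|x-y|^γ` for all `x,y`, where `0 < Ã`.  Let `φ(P) = 0`, `∇φ(P) ≠ 0`,
`n := ∇φ(P)/|∇φ(P)|`, `r := (|∇φ(P)|/(2Ã))^{1/γ}`.  Then for every unit vector `ν` and
`ρ ∈ (0,r)` with `(ρ/r)^γ < 2|ν⋅n|`: if `ν⋅n ≥ 0` then `φ(P + ρν) > 0`, and if `ν⋅n ≤ 0`
then `φ(P + ρν) < 0`. -/
theorem stmt11 (γ Atil : ℝ) (hγ : γ ∈ Set.Ioc (0 : ℝ) 1) (hA : 0 < Atil)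
    (φ : E2 → ℝ) (hφ : Differentiable ℝ φ)
    (hHolder : ∀ x y : E2, ‖gradient φ x - gradient φ y‖ ≤ Atil * ‖x - y‖ ^ γ)
    (P : E2) (hP : φ P = 0) (hgP : gradient φ P ≠ 0)
    (ν : E2) (hν : ‖ν‖ = 1) (ρ : ℝ)
    (hρ : ρ ∈ Set.Ioo 0 ((‖gradient φ P‖ / (2 * Atil)) ^ (1 / γ)))
    (hcone : (ρ / (‖gradient φ P‖ / (2 * Atil)) ^ (1 / γ)) ^ γ <
        2 * |⟪ν, ‖gradient φ P‖⁻¹ • gradient φ P⟫|) :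
    (0 ≤ ⟪ν, ‖gradient φ P‖⁻¹ • gradient φ P⟫ → 0 < φ (P + ρ • ν)) ∧
    (⟪ν, ‖gradient φ P‖⁻¹ • gradient φ P⟫ ≤ 0 → φ (P + ρ • ν) < 0) := by
  obtain ⟨hγ0, -⟩ := hγ
  obtain ⟨hρ0, -⟩ := hρ
  have hg : 0 < ‖gradient φ P‖ := norm_pos_iff.mpr hgP
  obtain ⟨s, ⟨hs0, hsρ⟩, hmvt⟩ := exists_add_smul_sub_eq_mul_inner_gradient hφ P ν hρ0
  rw [hP, sub_zero] at hmvt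
  rw [Real.div_rpow hρ0.le (by positivity), ← Real.rpow_mul (by positivity),
    one_div_mul_cancel hγ0.ne', Real.rpow_one] at hcone
  rw [hmvt]
  rw [real_inner_smul_right] at hcone ⊢
  rw [abs_mul, abs_of_pos (inv_pos.mpr hg), div_lt_iff₀ (by positivity)] at hcone
  have hsmall : Atil * ρ ^ γ < |⟪ν, gradient φ P⟫| := by
    field_simp at hcone
    linarith
  have hosc : |⟪ν, gradient φ (P + s • ν)⟫ - ⟪ν, gradient φ P⟫| ≤ Atil * ρ ^ γ := by
    rw [← inner_sub_right]
    calc |⟪ν, gradient φ (P + s • ν) - gradient φ P⟫|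
        ≤ ‖ν‖ * ‖gradient φ (P + s • ν) - gradient φ P‖ := abs_real_inner_le_norm _ _
      _ ≤ Atil * ‖P + s • ν - P‖ ^ γ := by rw [hν, one_mul]; exact hHolder _ _
      _ = Atil * s ^ γ := by
        rw [add_sub_cancel_left, norm_smul, hν, mul_one, Real.norm_of_nonneg hs0.le]
      _ ≤ Atil * ρ ^ γ := by gcongr
  obtain ⟨hlow, hupp⟩ := abs_le.mp hosc
  constructor
  · intro h
    rw [abs_of_nonneg (nonneg_of_mul_nonneg_right h (inv_pos.mpr hg))] at hsmall
    exact mul_pos hρ0 (by linarith)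
  · intro h
    rw [abs_of_nonpos (nonpos_of_mul_nonpos_right h (inv_pos.mpr hg))] at hsmall
    exact mul_neg_of_pos_of_neg hρ0 (by linarith)
end
end

section
/- Let α ∈ (0,1/2) and let x1, x2 be real numbers with 0 < x2 ≤ x1. Then 2·∫_{(0,x1)×(0,x2)} z2·(z1² + z2²)^{−(1+α)} dz1 dz2 ≤ (1/α)·(1/(1−2α) − 2^{−α})·x1^{1−2α}. -/
open MeasureTheory

/-- The inner integral, computed by the fundamental theorem of calculus. -/
lemma integral_mul_sq_add_sq_rpow {α a b : ℝ} (hα : 0 < α) (ha : 0 < a) (hb : 0 ≤ b) :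
    ∫ y in Set.Ioo (0 : ℝ) b, y * (a ^ 2 + y ^ 2) ^ (-(1 + α)) =
      1 / (2 * α) * (a ^ (-(2 * α)) - (a ^ 2 + b ^ 2) ^ (-α)) := by
  have hpos : ∀ y : ℝ, 0 < a ^ 2 + y ^ 2 := fun y => by positivity
  have hderiv : ∀ y : ℝ, HasDerivAt (fun y : ℝ => -(1 / (2 * α)) * (a ^ 2 + y ^ 2) ^ (-α))
      (y * (a ^ 2 + y ^ 2) ^ (-(1 + α))) y := by
    intro y
    have h : HasDerivAt (fun y : ℝ => a ^ 2 + y ^ 2) (2 * y) y := by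
      simpa using (hasDerivAt_pow 2 y).const_add (a ^ 2)
    refine ((h.rpow_const (p := -α) (Or.inl (hpos y).ne')).const_mul
      (-(1 / (2 * α)))).congr_deriv ?_
    rw [show -α - 1 = -(1 + α) by ring]
    field_simp
  have hcont : Continuous fun y : ℝ => y * (a ^ 2 + y ^ 2) ^ (-(1 + α)) :=
    continuous_id.mul <| (by fun_prop : Continuous fun y : ℝ => a ^ 2 + y ^ 2).rpow_const
      fun y => Or.inl (hpos y).ne'
  rw [← integral_Ioc_eq_integral_Ioo, ← intervalIntegral.integral_of_le hb,
    intervalIntegral.integral_eq_sub_of_hasDerivAt (fun y _ => hderiv y)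
      (hcont.intervalIntegrable _ _)]
  have h0 : (a ^ 2 + (0 : ℝ) ^ 2) ^ (-α) = a ^ (-(2 * α)) := by
    rw [zero_pow two_ne_zero, add_zero, ← Real.rpow_natCast, ← Real.rpow_mul ha.le]
    congr 1
    push_cast
    ring
  rw [h0]
  ring

/-- For `α ∈ (0,1/2)` and `0 < x₂ ≤ x₁`,
`2·∫_{(0,x₁)×(0,x₂)} z₂·(z₁² + z₂²)^{-(1+α)} dz ≤ (1/α)·(1/(1-2α) - 2^{-α})·x₁^{1-2α}`. -/
theorem stmt17 (α x₁ x₂ : ℝ) (hα : α ∈ Set.Ioo (0 : ℝ) (1/2))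
    (hx₂ : 0 < x₂) (hx : x₂ ≤ x₁) :
    2 * ∫ z in Set.Ioo (0 : ℝ) x₁ ×ˢ Set.Ioo (0 : ℝ) x₂,
        z.2 * (z.1 ^ 2 + z.2 ^ 2) ^ (-(1 + α)) ≤
      1 / α * (1 / (1 - 2 * α) - 2 ^ (-α)) * x₁ ^ (1 - 2 * α) := by
  obtain ⟨hα0, hα1⟩ := hα
  have hx₁ : 0 < x₁ := hx₂.trans_le hx
  have hβ : 0 < 1 - 2 * α := by linarith
  by_cases hint : IntegrableOn (fun z : ℝ × ℝ => z.2 * (z.1 ^ 2 + z.2 ^ 2) ^ (-(1 + α)))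
      (Set.Ioo (0 : ℝ) x₁ ×ˢ Set.Ioo (0 : ℝ) x₂) (volume.prod volume)
  swap
  · rw [Measure.volume_eq_prod, integral_undef hint, mul_zero]
    have h1 : (2 : ℝ) ^ (-α) ≤ 1 :=
      Real.rpow_le_one_of_one_le_of_nonpos one_le_two (by linarith)
    have h2 : 1 ≤ 1 / (1 - 2 * α) := by
      rw [le_div_iff₀ hβ]
      linarith
    have h3 : 0 ≤ 1 / (1 - 2 * α) - 2 ^ (-α) := by linarith
    positivity
  rw [Measure.volume_eq_prod, setIntegral_prod _ hint]
  have hG : IntegrableOn (fun x : ℝ => ∫ y in Set.Ioo (0 : ℝ) x₂,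
      y * (x ^ 2 + y ^ 2) ^ (-(1 + α))) (Set.Ioo 0 x₁) := by
    rw [IntegrableOn, ← Measure.prod_restrict] at hint
    exact hint.integral_prod_left
  have hpow : IntegrableOn (fun x : ℝ => x ^ (-(2 * α))) (Set.Ioo 0 x₁) :=
    ((intervalIntegrable_iff_integrableOn_Ioo_of_le hx₁.le).1
      (intervalIntegral.intervalIntegrable_rpow' (by linarith)))
  have hconst : IntegrableOn (fun _ : ℝ => (2 : ℝ) ^ (-α) * x₁ ^ (-(2 * α))) (Set.Ioo 0 x₁) :=
    integrableOn_const (by simp)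
  have hbound : ∀ x ∈ Set.Ioo 0 x₁, ∫ y in Set.Ioo (0 : ℝ) x₂, y * (x ^ 2 + y ^ 2) ^ (-(1 + α)) ≤
      1 / (2 * α) * (x ^ (-(2 * α)) - 2 ^ (-α) * x₁ ^ (-(2 * α))) := by
    rintro x ⟨hx0, hxx₁⟩
    rw [integral_mul_sq_add_sq_rpow hα0 hx0 hx₂.le]
    have h1 : (2 : ℝ) ^ (-α) * x₁ ^ (-(2 * α)) = (2 * x₁ ^ 2) ^ (-α) := by
      rw [Real.mul_rpow (by norm_num) (by positivity), ← Real.rpow_natCast x₁ 2,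
        ← Real.rpow_mul hx₁.le]
      congr 2
      push_cast
      ring
    have h2 : (2 * x₁ ^ 2) ^ (-α) ≤ (x ^ 2 + x₂ ^ 2) ^ (-α) :=
      Real.rpow_le_rpow_of_nonpos (by positivity) (by nlinarith) (by linarith)
    rw [h1]
    gcongr
  have hmono := setIntegral_mono_on hG ((hpow.sub hconst).const_mul (1 / (2 * α)))
    measurableSet_Ioo hbound
  have hval : ∫ x in Set.Ioo 0 x₁, 1 / (2 * α) * (x ^ (-(2 * α)) - 2 ^ (-α) * x₁ ^ (-(2 * α))) =
      1 / (2 * α) * ((1 / (1 - 2 * α) - 2 ^ (-α)) * x₁ ^ (1 - 2 * α)) := by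
    have hsplit : x₁ ^ (1 - 2 * α) = x₁ * x₁ ^ (-(2 * α)) := by
      rw [sub_eq_add_neg, Real.rpow_add hx₁, Real.rpow_one]
    rw [integral_const_mul, integral_sub hpow hconst, ← integral_Ioc_eq_integral_Ioo,
      ← intervalIntegral.integral_of_le hx₁.le, integral_rpow (Or.inl (by linarith)),
      setIntegral_const, show -(2 * α) + 1 = 1 - 2 * α by ring, Real.zero_rpow hβ.ne',
      Real.volume_real_Ioo_of_le hx₁.le, smul_eq_mul, sub_zero, sub_zero, hsplit]
    ring
  calc _ ≤ 2 * (1 / (2 * α) * ((1 / (1 - 2 * α) - 2 ^ (-α)) * x₁ ^ (1 - 2 * α))) := by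
        rw [← hval]
        exact mul_le_mul_of_nonneg_left hmono zero_le_two
    _ = _ := by
        field_simp
end

section
/- Let C > 0, T > 0, and let A : [0,T] → (0,∞) be differentiable with A′(t) ≤ C·A(t)·(1 + log₊ A(t)) for every t ∈ [0,T]. Then A(t) ≤ exp( (1 + log₊ A(0)) · e^{Ct} ) for every t ∈ [0,T]; in particular, A grows at most double exponentially in time. -/
/-- If `C, T > 0` and `A : [0,T] → (0,∞)` is differentiable with
`A′(t) ≤ C·A(t)·(1 + log₊ A(t))` on `[0,T]`, then
`A(t) ≤ exp((1 + log₊ A(0))·e^{Ct})` on `[0,T]` — at most double exponential growth. -/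
theorem stmt18 (C T : ℝ) (hC : 0 < C) (hT : 0 < T) (A A' : ℝ → ℝ)
    (hpos : ∀ t ∈ Set.Icc (0 : ℝ) T, 0 < A t)
    (hderiv : ∀ t ∈ Set.Icc (0 : ℝ) T, HasDerivWithinAt A (A' t) (Set.Icc (0 : ℝ) T) t)
    (hineq : ∀ t ∈ Set.Icc (0 : ℝ) T, A' t ≤ C * A t * (1 + max (Real.log (A t)) 0)) :
    ∀ t ∈ Set.Icc (0 : ℝ) T,
      A t ≤ Real.exp ((1 + max (Real.log (A 0)) 0) * Real.exp (C * t)) := by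
  set K : ℝ := 1 + max (Real.log (A 0)) 0 with hK
  have hK1 : 1 ≤ K := by simp [hK]
  have hlog : ∀ t ∈ Set.Icc (0 : ℝ) T,
      HasDerivWithinAt (fun s => Real.log (A s)) (A' t / A t) (Set.Icc (0 : ℝ) T) t :=
    fun t ht => (hderiv t ht).log (hpos t ht).ne'
  obtain ⟨ε, hε, hεT⟩ : ∃ ε : ℝ, 0 < ε ∧ ε * T * Real.exp (C * T) = 1 :=
    ⟨1 / (T * Real.exp (C * T)), by positivity, by field_simp⟩
  -- The term `ε * t` makes the barrier a strict supersolution; `ε` keeps its contribution below `1`.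
  have hB : ∀ t : ℝ, HasDerivAt (fun s => (K + ε * s) * Real.exp (C * s) - 1)
      (ε * Real.exp (C * t) + (K + ε * t) * (C * Real.exp (C * t))) t := by
    intro t
    have h₁ : HasDerivAt (fun s : ℝ => K + ε * s) ε t := by
      simpa using ((hasDerivAt_id t).const_mul ε).const_add K
    have h₂ : HasDerivAt (fun s : ℝ => Real.exp (C * s)) (C * Real.exp (C * t)) t := by
      simpa [mul_comm] using ((hasDerivAt_id t).const_mul C).exp
    exact (h₁.mul h₂).sub_const 1
  have hbarrier : ∀ ⦃t⦄, t ∈ Set.Icc (0 : ℝ) T →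
      Real.log (A t) ≤ (K + ε * t) * Real.exp (C * t) - 1 := by
    refine image_le_of_deriv_right_lt_deriv_boundary' (f' := fun t => A' t / A t)
      (fun t ht => (hlog t ht).continuousWithinAt) (fun t ht => ?_) ?_
      (fun t _ => (hB t).continuousAt.continuousWithinAt)
      (fun t _ => (hB t).hasDerivWithinAt) (fun t ht heq => ?_)
    · exact (hlog t ⟨ht.1, ht.2.le⟩).mono_of_mem_nhdsWithin
        (Icc_mem_nhdsGE_of_mem ht)
    · simp [hK]
    · have ht' : t ∈ Set.Icc (0 : ℝ) T := ⟨ht.1, ht.2.le⟩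
      have hexp : 1 ≤ Real.exp (C * t) := Real.one_le_exp (mul_nonneg hC.le ht.1)
      have hcoef : 1 ≤ K + ε * t := by nlinarith [mul_nonneg hε.le ht.1]
      have hnonneg : 0 ≤ Real.log (A t) := by
        rw [heq]
        nlinarith
      have hle : A' t / A t ≤ C * (1 + Real.log (A t)) := by
        rw [div_le_iff₀ (hpos t ht')]
        have h := hineq t ht'
        rw [max_eq_left hnonneg] at h
        linarith
      rw [heq] at hle
      have : 0 < ε * Real.exp (C * t) := by positivity
      linarith
  intro t ht
  rw [← Real.log_le_iff_le_exp (hpos t ht)]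
  have hsmall : ε * t * Real.exp (C * t) ≤ 1 := by
    rw [← hεT]
    have := ht.1
    have := ht.2
    gcongr
  linarith [hbarrier ht]
end
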